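/- arXiv:2506.06246 — 3 statements merged into one kernel-verified Lean document; each statement's English description precedes it below -/
import Mathlib

section
/- Let p be a prime, k a perfect field of characteristic p, n ≥ 1, and W_n(k) the ring of p-typical Witt vectors of length n of k. Let A′ be a smooth W_n(k)-algebra and set A := A′/pA′ (a smooth k-algebra), with quotient map π : A′ → A. Then: (i) for x = (x₁,…,x_n) ∈ W_n(A), the element Σ_{i=0}^{n−1} pⁱ·(x̃_{i+1})^{p^{n−i}} of A′, where x̃_j ∈ A′ is any lift of x_j along π, does not depend on the chosen lifts, and the resulting map F̃ⁿ : W_n(A) → A′ is a ring homomorphism; (ii) F̃ⁿ is semilinear over the n-th iterate Φⁿ of the Witt-vector Frobenius of W_n(k), i.e. F̃ⁿ(c·x) = Φⁿ(c)·F̃ⁿ(x) for all c ∈ W_n(k) and x ∈ W_n(A); (iii) F̃ⁿ is injective; (iv) the image of F̃ⁿ equals the kernel of the universal derivation d : A′ → Ω¹_{A′/W_n(k)}. -/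
universe u v

/-- The functorial ring homomorphism `W_n(R) →+* W_n(S)` induced by a ring homomorphism
`f : R →+* S`; it acts coefficientwise. -/
noncomputable def twMap (p : ℕ) [Fact p.Prime] {R : Type u} {S : Type v} [CommRing R]
    [CommRing S] (n : ℕ) (f : R →+* S) :
    TruncatedWittVector p n R →+* TruncatedWittVector p n S :=
  (WittVector.truncate n).liftOfRightInverse TruncatedWittVector.out
    TruncatedWittVector.truncateFun_out
    ⟨(WittVector.truncate n).comp (WittVector.map f), fun x hx => by
      rw [WittVector.mem_ker_truncate] at hx
      rw [RingHom.mem_ker, RingHom.comp_apply, ← RingHom.mem_ker,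
        WittVector.mem_ker_truncate]
      intro i hi
      rw [WittVector.map_coeff, hx i hi, map_zero]⟩

/-!
The `n`-th ghost component `W(A') → A'` kills the kernel of `W(A') → W_n(A)`, and `F̃ⁿ` is the
induced homomorphism. Its injectivity rests on the flatness of `A'` over `W_n(k)`, which puts the
`p ^ m`-torsion of `A'` into `p A'` for `m < n`, together with the reducedness of `A`.

The differential of the `m`-th ghost component of `w` is `p ^ m` times the form
`∑ i ≤ m, w i ^ (p ^ (m - i) - 1) dw i`. If `dz = 0`, then `z` is written inductively as an `m`-th
ghost component for `m ≤ n`: by the torsion property of the flat module `Ω`, the form above is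
divisible by `p`, so it vanishes over `A`, and it suffices that each `w i` is then a `p`-th power
modulo `p`. This is a local question, so let `A` be étale over `P = k[x₁, …, x_d]`. For a
derivation `D` with `D ^ p = 0`, the operator `D ^ (p - 1)` sends `x ^ (p - 1) D x` to
`-(D x) ^ p`, which yields `D (w i) = 0` by induction on `m`; the identity is obtained by comparing
coefficients in the truncated exponential `exp(tD)`. Finally the relative Frobenius of `A` over `P`
is an isomorphism, so the exact sequence `P → P → P ^ d` of the Frobenius and the partial
derivatives stays exact after base change to `A`, and elements of `A` killed by all partial
derivatives are `p`-th powers.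
-/

open Finset Polynomial
open scoped Nat TensorProduct

namespace TildeF

section Derivation

variable {k A : Type*} [CommRing k] [CommRing A] [Algebra k A] (D : Derivation k A A)

theorem iterate_mul (n : ℕ) (x y : A) :
    D^[n] (x * y) = ∑ ij ∈ antidiagonal n, n.choose ij.1 • (D^[ij.1] x * D^[ij.2] y) := by
  induction n with
  | zero => simp
  | succ n ih =>
    rw [sum_antidiagonal_choose_succ_nsmul (fun i j ↦ D^[i] x * D^[j] y) n]
    simp only [Function.iterate_succ_apply', ih, map_sum, map_nsmul, D.leibniz, smul_eq_mul,
      smul_add, sum_add_distrib, add_right_inj]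
    refine sum_congr rfl fun ⟨i, j⟩ hij ↦ ?_
    rw [n.choose_symm_of_eq_add (mem_antidiagonal.1 hij).symm, mul_comm]

theorem iterate_mul_of_map_eq_zero {s : A} (hs : D s = 0) (n : ℕ) (y : A) :
    D^[n] (s * y) = s * D^[n] y := by
  induction n with
  | zero => rfl
  | succ n ih => rw [Function.iterate_succ_apply', ih, D.leibniz, hs, smul_zero, add_zero,
      smul_eq_mul, ← Function.iterate_succ_apply' D]

variable (p : ℕ)

theorem map_pow_char [CharP A p] (a : A) : D (a ^ p) = 0 := by
  rw [D.leibniz_pow, ← Nat.cast_smul_eq_nsmul A, CharP.cast_eq_zero, zero_smul]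

variable [hp : Fact p.Prime] [CharP A p]

theorem iterate_char_mul (x y : A) : D^[p] (x * y) = x * D^[p] y + y * D^[p] x := by
  obtain ⟨q, hq⟩ := Nat.exists_eq_succ_of_ne_zero hp.out.ne_zero
  have inner_eq_zero : ∀ i ∈ range q,
      p.choose (i + 1) • (D^[i + 1] x * D^[p - (i + 1)] y) = 0 := fun i hi ↦ by
    have hdvd : p ∣ p.choose (i + 1) :=
      hp.out.dvd_choose_self i.succ_ne_zero (by have := mem_range.1 hi; omega)
    rw [← Nat.cast_smul_eq_nsmul A, (CharP.cast_eq_zero_iff A p _).2 hdvd, zero_smul]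
  rw [iterate_mul, Nat.sum_antidiagonal_eq_sum_range_succ_mk, sum_range_succ]
  rw [show range p = range (q + 1) by rw [hq], sum_range_succ', sum_eq_zero inner_eq_zero]
  simp [mul_comm]

/-- The `p`-th iterate of a derivation in characteristic `p`, which is again a derivation. -/
def charIterate : Derivation k A A :=
  Derivation.mk' ((D : A →ₗ[k] A) ^ p) fun x y ↦ by
    simpa [Module.End.pow_apply] using iterate_char_mul D p x y

theorem charIterate_apply (x : A) : charIterate D p x = D^[p] x :=
  Module.End.pow_apply _ _ _

/-- The scalar `1 / i!` in a ring of characteristic `p`; it is a genuine inverse of `i!` only for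
`i < p`, and is `0` otherwise. -/
def invFactorial (A : Type*) [CommRing A] [CharP A p] (i : ℕ) : A :=
  ZMod.castHom dvd_rfl A (i ! : ZMod p)⁻¹

variable {p}

theorem factorial_mul_invFactorial {i : ℕ} (hi : i < p) :
    (i ! : A) * invFactorial p A i = 1 := by
  have hne : (i ! : ZMod p) ≠ 0 := by
    rw [Ne, CharP.cast_eq_zero_iff (ZMod p) p, hp.out.dvd_factorial]
    exact not_le.2 hi
  rw [invFactorial, ← map_natCast (ZMod.castHom dvd_rfl A), ← map_mul, mul_inv_cancel₀ hne,
    map_one]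

theorem invFactorial_mul_choose {i j : ℕ} (hij : i + j < p) :
    invFactorial p A (i + j) * (i + j).choose i = invFactorial p A i * invFactorial p A j := by
  have hi := factorial_mul_invFactorial (A := A) (show i < p by omega)
  have hj := factorial_mul_invFactorial (A := A) (show j < p by omega)
  have hn := factorial_mul_invFactorial (A := A) hij
  have hchoose := congrArg (Nat.cast (R := A)) (Nat.add_choose_mul_factorial_mul_factorial i j)
  rw [← Nat.choose_symm_add] at hchoose
  push_cast at hchoose
  linear_combination
    -(invFactorial p A (i + j)) * (i + j).choose i * (j ! * invFactorial p A j) * hi -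
    invFactorial p A (i + j) * (i + j).choose i * hj +
    invFactorial p A (i + j) * invFactorial p A i * invFactorial p A j * hchoose +
    invFactorial p A i * invFactorial p A j * hn

theorem invFactorial_one : invFactorial p A 1 = 1 := by
  simpa using factorial_mul_invFactorial (A := A) hp.out.one_lt

theorem succ_mul_invFactorial_succ {i : ℕ} (hi : i + 1 < p) :
    (i + 1) * invFactorial p A (i + 1) = invFactorial p A i := by
  have h := invFactorial_mul_choose (A := A) hi
  rw [invFactorial_one, mul_one, Nat.choose_succ_self_right, mul_comm] at h
  exact_mod_cast h

theorem invFactorial_sub_one : invFactorial p A (p - 1) = -1 := by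
  rw [invFactorial, ZMod.wilsons_lemma, inv_neg, inv_one, map_neg, map_one]

variable (p)

/-- The exponential `exp(tD)x` truncated below degree `p`. -/
noncomputable def truncExp (x : A) : A[X] :=
  ∑ i ∈ range p, monomial i (invFactorial p A i * D^[i] x)

theorem coeff_truncExp (x : A) {n : ℕ} (hn : n < p) :
    (truncExp D p x).coeff n = invFactorial p A n * D^[n] x := by
  simp [truncExp, coeff_monomial, hn]

theorem coeff_truncExp_mul (x y : A) {n : ℕ} (hn : n < p) :
    (truncExp D p (x * y)).coeff n = (truncExp D p x * truncExp D p y).coeff n := by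
  rw [coeff_truncExp D p _ hn, coeff_mul, iterate_mul, mul_sum]
  refine sum_congr rfl fun ⟨i, j⟩ hij ↦ ?_
  obtain rfl : i + j = n := mem_antidiagonal.1 hij
  rw [coeff_truncExp D p x (by omega), coeff_truncExp D p y (by omega), nsmul_eq_mul]
  linear_combination (D^[i] x * D^[j] y) * invFactorial_mul_choose (A := A) hn

theorem quotient_mk_eq_mk_iff_coeff {f g : A[X]} {n : ℕ} :
    Ideal.Quotient.mk (Ideal.span {(X : A[X]) ^ n}) f = Ideal.Quotient.mk _ g ↔
      ∀ m < n, f.coeff m = g.coeff m := by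
  simp [Ideal.Quotient.mk_eq_mk_iff_sub_mem, Ideal.mem_span_singleton, X_pow_dvd_iff, sub_eq_zero]

/-- The truncated exponential of a derivation as a ring homomorphism to `A[X] ⧸ (X ^ p)`. -/
noncomputable def truncExpHom : A →+* A[X] ⧸ Ideal.span {(X : A[X]) ^ p} where
  toFun x := Ideal.Quotient.mk _ (truncExp D p x)
  map_one' := by
    rw [← map_one (Ideal.Quotient.mk _), quotient_mk_eq_mk_iff_coeff]
    intro m hm
    rw [coeff_truncExp D p _ hm, coeff_one]
    rcases m with _ | m
    · simpa using factorial_mul_invFactorial (A := A) hp.out.pos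
    · simp [Function.iterate_succ_apply, iterate_map_zero]
  map_mul' x y := by
    rw [← map_mul, quotient_mk_eq_mk_iff_coeff]
    exact fun m ↦ coeff_truncExp_mul D p x y
  map_zero' := by simp [truncExp, iterate_map_zero]
  map_add' x y := by simp [truncExp, iterate_map_add, mul_add, sum_add_distrib]

theorem coeff_pow_mul_derivative {R : Type*} [CommRing R] (f : R[X]) (n : ℕ) :
    (f ^ n * derivative f).coeff n = (f ^ (n + 1)).coeff (n + 1) := by
  -- differentiate `f ^ (n + 1)`: the factor `n + 1` may be cancelled in a polynomial ring over `ℤ`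
  let ev : MvPolynomial R ℤ →+* R := (MvPolynomial.aeval id).toRingHom
  have hev : Function.Surjective ev := fun r ↦ ⟨MvPolynomial.X r, MvPolynomial.aeval_X _ _⟩
  obtain ⟨g, rfl⟩ := Polynomial.map_surjective ev hev f
  rw [derivative_map, ← Polynomial.map_pow, ← Polynomial.map_mul, ← Polynomial.map_pow, coeff_map,
    coeff_map]
  congr 1
  have hder := congrArg (coeff · n) (derivative_pow_succ g n)
  simp only [coeff_derivative, mul_assoc, coeff_C_mul] at hder
  have hne : (n + 1 : MvPolynomial R ℤ) ≠ 0 := by exact_mod_cast n.succ_ne_zero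
  refine mul_left_cancel₀ hne ?_
  rw [mul_comm _ (coeff _ (n + 1)), hder]

theorem coeff_pow_char (f : A[X]) : (f ^ p).coeff p = f.coeff 1 ^ p := by
  have h := coeff_expand_mul hp.out.pos (f.map (frobenius A p)) 1
  rwa [one_mul, ← map_expand, map_frobenius_expand, coeff_map, frobenius_def] at h

variable {D p} in
theorem coeff_derivative_truncExp {x : A} (hx : D^[p] x = 0) {n : ℕ} (hn : n < p) :
    (derivative (truncExp D p x)).coeff n = (truncExp D p (D x)).coeff n := by
  rw [coeff_derivative, coeff_truncExp D p _ hn, ← Function.iterate_succ_apply]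
  rcases (Nat.succ_le_of_lt hn).lt_or_eq with hlt | rfl
  · rw [coeff_truncExp D p _ hlt]
    linear_combination D^[n + 1] x * succ_mul_invFactorial_succ (A := A) hlt
  · rw [hx, mul_zero, truncExp, finsetSum_coeff, sum_eq_zero, zero_mul]
    simp +contextual [coeff_monomial, ne_of_lt]

variable {D p} in
theorem iterate_sub_one_pow_mul {x : A} (hx : D^[p] x = 0) :
    D^[p - 1] (x ^ (p - 1) * D x) = -(D x) ^ p := by
  have hlt : p - 1 < p := Nat.sub_one_lt hp.out.ne_zero
  have key : truncExpHom D p (x ^ (p - 1) * D x) =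
      Ideal.Quotient.mk _ (truncExp D p x ^ (p - 1) * derivative (truncExp D p x)) := by
    rw [map_mul, map_pow, map_mul, map_pow]
    exact congrArg _ (quotient_mk_eq_mk_iff_coeff.2 fun m hm ↦
      (coeff_derivative_truncExp hx hm).symm)
  have coeff_eq := quotient_mk_eq_mk_iff_coeff.1 key (p - 1) hlt
  rw [coeff_truncExp D p _ hlt, invFactorial_sub_one, coeff_pow_mul_derivative,
    Nat.sub_add_cancel hp.out.one_le, coeff_pow_char, coeff_truncExp D p x hp.out.one_lt,
    invFactorial_one, one_mul, Function.iterate_one] at coeff_eq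
  linear_combination -coeff_eq

theorem pow_sub_one_eq_mul {M : Type*} [Monoid M] {q r : ℕ} (hq : 0 < q) (hr : 0 < r) (x : M) :
    x ^ (q * r - 1) = (x ^ (q - 1)) ^ r * x ^ (r - 1) := by
  obtain ⟨q, rfl⟩ := Nat.exists_eq_succ_of_ne_zero hq.ne'
  obtain ⟨r, rfl⟩ := Nat.exists_eq_succ_of_ne_zero hr.ne'
  rw [← pow_mul, ← pow_add]
  congr 1
  simp [Nat.succ_mul]

variable {D p} in
theorem map_eq_zero_of_sum_pow_mul_eq_zero [IsReduced A] (hD : ∀ x, D^[p] x = 0) {m : ℕ}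
    {y : ℕ → A} (h : ∑ i ∈ range (m + 1), y i ^ (p ^ (m - i) - 1) * D (y i) = 0) :
    ∀ i ≤ m, D (y i) = 0 := by
  induction m with
  | zero => simpa using h
  | succ m ih =>
    have hterm : ∀ i ∈ range (m + 1), D^[p - 1] (y i ^ (p ^ (m + 1 - i) - 1) * D (y i)) =
        -(y i ^ (p ^ (m - i) - 1) * D (y i)) ^ p := fun i hi ↦ by
      rw [Nat.succ_sub (mem_range_succ_iff.1 hi), pow_succ,
        pow_sub_one_eq_mul (pow_pos hp.out.pos _) hp.out.pos, mul_assoc,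
        iterate_mul_of_map_eq_zero D (map_pow_char D p _), iterate_sub_one_pow_mul (hD _), mul_pow,
        mul_neg]
    have hlast : D^[p - 1] (D (y (m + 1))) = 0 := by
      rw [← Function.iterate_succ_apply, Nat.succ_eq_add_one, Nat.sub_add_cancel hp.out.one_le, hD]
    have hsum : ∑ i ∈ range (m + 1), y i ^ (p ^ (m - i) - 1) * D (y i) = 0 := by
      refine eq_zero_of_pow_eq_zero (n := p) ?_
      have := congrArg ((D : A →ₗ[k] A) ^ (p - 1)) h
      simp only [map_sum, sum_range_succ _ (m + 1), map_add, map_zero, Module.End.pow_apply,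
        Derivation.coeFn_coe, Nat.sub_self, pow_zero, one_mul, hlast, sum_congr rfl hterm,
        sum_neg_distrib, add_zero, neg_eq_zero] at this
      rwa [sum_pow_char]
    have hle := ih hsum
    intro i hi
    rcases hi.lt_or_eq with hlt | rfl
    · exact hle i (Nat.lt_succ_iff.1 hlt)
    · rw [sum_range_succ, sum_eq_zero fun i hi ↦ by rw [hle i (mem_range_succ_iff.1 hi), mul_zero]]
        at h
      simpa using h

end Derivation

section RelativeFrobenius

theorem charP_of_algebra (P B : Type*) [CommRing P] [CommRing B] [Algebra P B] [Nontrivial B]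
    (p : ℕ) [hp : Fact p.Prime] [CharP P p] : CharP B p :=
  (CharP.charP_iff_prime_eq_zero hp.out).2 <| by
    rw [← map_natCast (algebraMap P B), CharP.cast_eq_zero, map_zero]

theorem surjective_algebraMap_of_pow_mem_range {B C : Type*} [CommRing B] [CommRing C] [Algebra B C]
    [Algebra.FormallyUnramified B C] [Algebra.FiniteType B C] (p : ℕ) [hp : Fact p.Prime]
    [CharP C p] (h : ∀ c : C, ∃ b : B, algebraMap B C b = c ^ p) :
    Function.Surjective (algebraMap B C) := by
  have : Nontrivial C := CharP.nontrivial_of_char_ne_one hp.out.ne_one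
  have : Nontrivial (C ⊗[B] C) :=
    (Algebra.TensorProduct.lmul' B (S := C)).toRingHom.domain_nontrivial
  have : CharP (C ⊗[B] C) p := charP_of_algebra C (C ⊗[B] C) p
  have hint : Algebra.IsIntegral B C := ⟨fun c ↦ by
    obtain ⟨b, hb⟩ := h c
    exact .of_pow hp.out.pos (hb ▸ isIntegral_algebraMap)⟩
  have hfin : Module.Finite B C := Algebra.IsIntegral.finite
  -- the diagonal ideal is nil, so unramifiedness makes the two coprojections `C ⇉ C ⊗ C` agree
  have hnil : IsNilpotent (KaehlerDifferential.ideal B C) := by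
    rw [Ideal.FG.isNilpotent_iff_le_nilradical (KaehlerDifferential.ideal_fg B C),
      ← KaehlerDifferential.span_range_eq_ideal, Ideal.span_le]
    rintro _ ⟨c, rfl⟩
    obtain ⟨b, hb⟩ := h c
    refine mem_nilradical.2 ⟨p, ?_⟩
    rw [sub_pow_char, Algebra.TensorProduct.tmul_pow, Algebra.TensorProduct.tmul_pow, one_pow, ← hb,
      Algebra.algebraMap_eq_smul_one, ← TensorProduct.smul_tmul, sub_self]
  have hepi : Algebra.IsEpi B C := (Algebra.isEpi_iff_forall_one_tmul_eq B C).2 fun c ↦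
    DFunLike.congr_fun (Algebra.FormallyUnramified.ext'
      (Algebra.TensorProduct.lmul' B (S := C) : C ⊗[B] C →+* C) hnil
      Algebra.TensorProduct.includeRight Algebra.TensorProduct.includeLeft fun c ↦ by simp) c
  exact Algebra.isEpi_iff_surjective_algebraMap_of_finite.1 hepi

theorem bijective_algebraMap_of_pow_mem_range {Q B C : Type*} [CommRing Q] [CommRing B]
    [CommRing C] [Algebra Q B] [Algebra Q C] [Algebra B C] [IsScalarTower Q B C]
    [Algebra.Etale Q B] [Algebra.Etale Q C]
    (p : ℕ) [hp : Fact p.Prime] [CharP C p] (h : ∀ c : C, ∃ b : B, algebraMap B C b = c ^ p)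
    (hker : ∀ b : B, algebraMap B C b = 0 → b ^ p = 0) :
    Function.Bijective (algebraMap B C) := by
  have hetale : Algebra.Etale B C := .of_restrictScalars Q B C
  have hsurj := surjective_algebraMap_of_pow_mem_range p h
  have hfg : (RingHom.ker (algebraMap B C)).FG :=
    Algebra.FinitePresentation.ker_fG_of_surjective (IsScalarTower.toAlgHom Q B C) hsurj
  obtain ⟨e, he, hspan⟩ := (Ideal.isIdempotentElem_iff_of_fg _ hfg).1
    ((Algebra.FormallyEtale.iff_of_surjective hsurj).1 hetale.formallyEtale)
  have he0 : e = 0 := by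
    rw [← he.pow_eq hp.out.ne_zero]
    exact hker e (by rw [← RingHom.mem_ker, hspan]; exact Ideal.mem_span_singleton_self e)
  refine ⟨(RingHom.injective_iff_ker_eq_bot _).2 ?_, hsurj⟩
  simpa [he0] using hspan

/-- The ring `R`, considered as an algebra over `R`, and over every ring mapping to `R`, through the
Frobenius `x ↦ x ^ p`. -/
def FrobeniusPushforward (_p : ℕ) (R : Type*) := R

namespace FrobeniusPushforward

variable (p : ℕ) (P A : Type*) [CommRing P] [CommRing A] [Algebra P A]

instance : CommRing (FrobeniusPushforward p A) := inferInstanceAs (CommRing A)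

instance [CharP A p] : CharP (FrobeniusPushforward p A) p := inferInstanceAs (CharP A p)

instance : Algebra (FrobeniusPushforward p P) (FrobeniusPushforward p A) :=
  inferInstanceAs (Algebra P A)

instance [Algebra.Etale P A] :
    Algebra.Etale (FrobeniusPushforward p P) (FrobeniusPushforward p A) :=
  inferInstanceAs (Algebra.Etale P A)

variable {p A} in
/-- The identity of `A`, as an isomorphism onto the Frobenius pushforward. -/
def of : A ≃+* FrobeniusPushforward p A := RingEquiv.refl A

variable [hp : Fact p.Prime] [CharP A p]

instance : Algebra P (FrobeniusPushforward p A) :=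
  (((of : A ≃+* FrobeniusPushforward p A) : A →+* _).comp
    ((frobenius A p).comp (algebraMap P A))).toAlgebra

theorem algebraMap_apply (x : P) :
    algebraMap P (FrobeniusPushforward p A) x = of (algebraMap P A x ^ p) := rfl

instance : IsScalarTower P A (FrobeniusPushforward p A) :=
  .of_algebraMap_eq fun _ ↦ rfl

variable [CharP P p]

instance : IsScalarTower P (FrobeniusPushforward p P) (FrobeniusPushforward p A) :=
  .of_algebraMap_eq fun x ↦ (map_pow (algebraMap P A) x p).symm

/-- The relative Frobenius `Frob_* P ⊗ A → Frob_* A`, `x ⊗ a ↦ x * a ^ p`. -/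
def relativeFrobenius :
    FrobeniusPushforward p P ⊗[P] A →ₐ[FrobeniusPushforward p P] FrobeniusPushforward p A :=
  Algebra.TensorProduct.lift (Algebra.ofId _ _)
    (IsScalarTower.toAlgHom P A (FrobeniusPushforward p A)) fun _ _ ↦ Commute.all _ _

variable {P A}

theorem relativeFrobenius_tmul (x : FrobeniusPushforward p P) (a : A) :
    relativeFrobenius p P A (x ⊗ₜ a) = algebraMap _ _ x * of (a ^ p) := rfl

theorem pow_eq_one_tmul (z : FrobeniusPushforward p P ⊗[P] A) :
    z ^ p = 1 ⊗ₜ (of (p := p)).symm (relativeFrobenius p P A z) := by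
  have : Nontrivial (FrobeniusPushforward p A) := CharP.nontrivial_of_char_ne_one hp.out.ne_one
  have := (relativeFrobenius p P A).toRingHom.domain_nontrivial
  have : CharP (FrobeniusPushforward p P ⊗[P] A) p :=
    charP_of_algebra (FrobeniusPushforward p P) _ p
  induction z with
  | zero => simp [hp.out.ne_zero]
  | add y z hy hz => rw [add_pow_char, hy, hz, map_add, map_add, TensorProduct.tmul_add]
  | tmul x a =>
    have hx : x ^ p = ((of (p := p)).symm x : P) • (1 : FrobeniusPushforward p P) := by
      rw [← Algebra.algebraMap_eq_smul_one]; rfl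
    rw [Algebra.TensorProduct.tmul_pow, hx, TensorProduct.smul_tmul, relativeFrobenius_tmul,
      Algebra.smul_def]
    rfl

theorem relativeFrobenius_bijective [Algebra.Etale P A] :
    Function.Bijective (relativeFrobenius p P A) := by
  let := (relativeFrobenius p P A).toAlgebra
  have := IsScalarTower.of_algHom (relativeFrobenius p P A)
  refine bijective_algebraMap_of_pow_mem_range (Q := FrobeniusPushforward p P) p
    (fun c ↦ ⟨1 ⊗ₜ of.symm c, ?_⟩) fun z hz ↦ ?_
  · exact (relativeFrobenius_tmul p 1 _).trans (by rw [map_one, one_mul]; rfl)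
  · rw [pow_eq_one_tmul, show relativeFrobenius p P A z = 0 from hz, map_zero,
      TensorProduct.tmul_zero]

theorem relativeFrobenius_rTensor_linearMap (z : P ⊗[P] A) :
    relativeFrobenius p P A ((Algebra.linearMap P (FrobeniusPushforward p P)).rTensor A z) =
      of (TensorProduct.lid P A z ^ p) := by
  obtain ⟨a, rfl⟩ := (TensorProduct.lid P A).symm.surjective z
  simp [relativeFrobenius_tmul]

variable (P) in
include p in
theorem isReduced_of_etale [Algebra.Etale P A] [IsReduced P] : IsReduced A := by
  have hinj : Function.Injective (algebraMap P (FrobeniusPushforward p P)) :=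
    frobenius_inj P p
  have := (relativeFrobenius_bijective p (P := P) (A := A)).1.comp
    (Algebra.TensorProduct.includeRight_injective (B := A) hinj)
  refine (isReduced_iff_pow_one_lt p hp.out.one_lt).2 fun a ha ↦ this ?_
  rw [Function.comp_apply, Function.comp_apply, map_zero, map_zero,
    Algebra.TensorProduct.includeRight_apply, relativeFrobenius_tmul, ha, map_zero, mul_zero]

/-- A derivation of `P` as a `P`-linear endomorphism of the Frobenius pushforward of `P`. -/
def derivationLinearMap {k : Type*} [CommRing k] [Algebra k P] (δ : Derivation k P P) :
    FrobeniusPushforward p P →ₗ[P] FrobeniusPushforward p P where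
  toFun x := of (δ (of.symm x))
  map_add' x y := by rw [map_add, map_add, map_add]
  map_smul' c x := by simp [Algebra.smul_def, algebraMap_apply]

theorem relativeFrobenius_derivation {k : Type*} [CommRing k] [Algebra k P] [Algebra k A]
    {δ : Derivation k P P} {D : Derivation k A A}
    (h : ∀ x, D (algebraMap P A x) = algebraMap P A (δ x))
    (z : FrobeniusPushforward p P ⊗[P] A) :
    relativeFrobenius p P A ((derivationLinearMap p δ).rTensor A z) =
      of (D (of.symm (relativeFrobenius p P A z))) := by
  induction z with
  | zero => simp
  | add y z hy hz => simp only [map_add, hy, hz]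
  | tmul x a =>
    obtain ⟨x, rfl⟩ := of.surjective x
    rw [LinearMap.rTensor_tmul, relativeFrobenius_tmul, relativeFrobenius_tmul]
    change algebraMap P A (δ x) * a ^ p = D (algebraMap P A x * a ^ p)
    rw [mul_comm (algebraMap P A x), D.leibniz, map_pow_char, h, smul_zero, add_zero, smul_eq_mul,
      mul_comm]

variable {p} in
theorem exists_pow_eq_of_derivation_eq_zero [Algebra.Etale P A]
    {k : Type*} [CommRing k] [Algebra k P] [Algebra k A] {σ : Type*} [Finite σ]
    {δ : σ → Derivation k P P} {D : σ → Derivation k A A}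
    (hD : ∀ j x, D j (algebraMap P A x) = algebraMap P A (δ j x))
    (hδ : ∀ x, (∀ j, δ j x = 0) → ∃ w, w ^ p = x) {a : A} (ha : ∀ j, D j a = 0) :
    ∃ b, b ^ p = a := by
  classical
  have := Fintype.ofFinite σ
  let grad : FrobeniusPushforward p P →ₗ[P] σ → FrobeniusPushforward p P :=
    LinearMap.pi fun j ↦ derivationLinearMap p (δ j)
  have hgrad : grad = ∑ j, LinearMap.single P _ j ∘ₗ derivationLinearMap p (δ j) := by
    ext x j
    simp [grad, Pi.single_apply]
  have hexact : Function.Exact (Algebra.linearMap P (FrobeniusPushforward p P)) grad := by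
    refine fun x ↦ ⟨fun hx ↦ hδ x fun j ↦ congrFun hx j, ?_⟩
    rintro ⟨w, rfl⟩
    exact funext fun j ↦ map_pow_char (δ j) p w
  obtain ⟨z, hz⟩ := (relativeFrobenius_bijective p (P := P) (A := A)).2 (of a)
  have hz0 : ∀ j, (derivationLinearMap p (δ j)).rTensor A z = 0 := fun j ↦ by
    apply (relativeFrobenius_bijective p (P := P) (A := A)).1
    rw [relativeFrobenius_derivation p (hD j), hz, RingEquiv.symm_apply_apply, ha, map_zero,
      map_zero]
  obtain ⟨w, hw⟩ := (Module.Flat.rTensor_exact A hexact z).1 <| by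
    rw [hgrad, ← LinearMap.coe_rTensorHom, map_sum, LinearMap.sum_apply]
    simp [LinearMap.rTensor_comp, hz0]
  exact ⟨TensorProduct.lid P A w, of.injective <| by
    rw [← relativeFrobenius_rTensor_linearMap, hw, hz]⟩

end FrobeniusPushforward

end RelativeFrobenius

section ExtendDerivation

theorem derivation_eq_zero_of_formallyUnramified {k P A : Type*} [CommRing k] [CommRing P]
    [CommRing A] [Algebra k A] [Algebra P A] [Algebra.FormallyUnramified P A]
    {D : Derivation k A A} (hD : ∀ x, D (algebraMap P A x) = 0) : D = 0 := by
  let DP : Derivation P A A := Derivation.mk'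
    { toFun := D
      map_add' := map_add D
      map_smul' := fun x a ↦ by simp [Algebra.smul_def, hD] } D.leibniz
  ext a
  change DP a = 0
  rw [← DP.liftKaehlerDifferential_comp_D, Subsingleton.elim (KaehlerDifferential.D P A a) 0,
    map_zero]

variable {k P A : Type*} [CommRing k] [CommRing P] [CommRing A] [Algebra k P] [Algebra k A]
  [Algebra P A] [IsScalarTower k P A]

/-- The unique extension of a derivation to a formally étale algebra. -/
noncomputable def extendDerivation (A : Type*) [CommRing A] [Algebra k A] [Algebra P A]
    [IsScalarTower k P A] [Algebra.FormallyEtale P A] (δ : Derivation k P P) : Derivation k A A :=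
  ((LinearMap.liftBaseChange A (Algebra.linearMap P A ∘ₗ δ.liftKaehlerDifferential)) ∘ₗ
    (KaehlerDifferential.tensorKaehlerEquivOfFormallyEtale k P A).symm.toLinearMap).compDer
      (KaehlerDifferential.D k A)

theorem extendDerivation_algebraMap [Algebra.FormallyEtale P A] (δ : Derivation k P P) (x : P) :
    extendDerivation A δ (algebraMap P A x) = algebraMap P A (δ x) := by
  simp [extendDerivation,
    KaehlerDifferential.tensorKaehlerEquivOfFormallyEtale_symm_D_algebraMap]

theorem iterate_char_extendDerivation {p : ℕ} [Fact p.Prime] [CharP A p] [CharP P p]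
    [Algebra.FormallyEtale P A] {δ : Derivation k P P} (hδ : charIterate δ p = 0) (a : A) :
    (extendDerivation A δ)^[p] a = 0 := by
  have hiter : ∀ (n : ℕ) (x : P),
      (extendDerivation A δ)^[n] (algebraMap P A x) = algebraMap P A (δ^[n] x) := fun n x ↦
    (Function.Semiconj.iterate_right
      (fun x ↦ (extendDerivation_algebraMap (A := A) δ x).symm) n x).symm
  have hzero : charIterate (extendDerivation A δ) p = 0 :=
    derivation_eq_zero_of_formallyUnramified (P := P) fun x ↦ by
      rw [charIterate_apply, hiter, ← charIterate_apply, hδ, Derivation.zero_apply, map_zero]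
  rw [← charIterate_apply, hzero, Derivation.zero_apply]

end ExtendDerivation

section Coordinates

variable {p : ℕ} [hp : Fact p.Prime] {k : Type*} [CommRing k] [CharP k p]

theorem dvd_of_pderiv_eq_zero {σ : Type*} {f : MvPolynomial σ k} {i : σ}
    (hf : MvPolynomial.pderiv i f = 0) {m : σ →₀ ℕ} (hm : m ∈ f.support) : p ∣ m i := by
  classical
  by_contra hdvd
  have hle : Finsupp.single i 1 ≤ m := by
    rw [Finsupp.single_le_iff, Nat.one_le_iff_ne_zero]
    exact fun h ↦ hdvd (h ▸ dvd_zero p)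
  have hcoeff := congrArg (MvPolynomial.coeff (m - Finsupp.single i 1)) hf
  rw [MvPolynomial.coeff_pderiv, tsub_add_cancel_of_le hle, MvPolynomial.coeff_zero,
    ← Nat.cast_succ, Finsupp.tsub_apply, Finsupp.single_eq_same, Nat.succ_eq_add_one,
    Nat.sub_add_cancel (by simpa using hle i),
    ((CharP.isUnit_natCast_iff hp.out).2 hdvd).mul_left_eq_zero] at hcoeff
  exact MvPolynomial.mem_support_iff.1 hm hcoeff

theorem exists_pow_eq_of_pderiv_eq_zero [PerfectRing k p] {σ : Type*} {f : MvPolynomial σ k}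
    (hf : ∀ i, MvPolynomial.pderiv i f = 0) : ∃ g, g ^ p = f := by
  have hmem : f ∈ (MvPolynomial.expand p : MvPolynomial σ k →ₐ[k] _).range := by
    rw [f.as_sum]
    refine sum_mem fun m hm ↦
      ⟨MvPolynomial.monomial (m.mapRange (· / p) (Nat.zero_div p)) (f.coeff m),
        (MvPolynomial.expand_monomial p _ _).trans ?_⟩
    congr 2
    ext i
    simp [Nat.mul_div_cancel' (dvd_of_pderiv_eq_zero (hf i) hm)]
  obtain ⟨g, rfl⟩ := (AlgHom.mem_range _).1 hmem
  obtain ⟨h, rfl⟩ := MvPolynomial.map_surjective _ (surjective_frobenius k p) g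
  exact ⟨h, by rw [← MvPolynomial.map_frobenius_expand, MvPolynomial.map_expand]⟩

theorem charIterate_pderiv {σ : Type*} (i : σ) :
    charIterate (MvPolynomial.pderiv i : Derivation k (MvPolynomial σ k) _) p = 0 := by
  classical
  refine MvPolynomial.derivation_ext fun j ↦ ?_
  obtain ⟨q, rfl⟩ := Nat.exists_eq_add_of_le' hp.out.two_le
  rw [charIterate_apply, Function.iterate_add_apply]
  rcases eq_or_ne j i with rfl | hij <;> simp [iterate_map_zero, *]

end Coordinates

section GhostForm

/-- The differential `∑ i ≤ m, y i ^ (p ^ (m - i) - 1) dy i`, which is the derivative of the `m`-th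
ghost component of `y` divided by `p ^ m`. -/
noncomputable def ghostForm (R : Type*) {A : Type*} [CommRing R] [CommRing A] [Algebra R A]
    (p m : ℕ) (y : ℕ → A) : Ω[A⁄R] :=
  ∑ i ∈ range (m + 1), y i ^ (p ^ (m - i) - 1) • KaehlerDifferential.D R A (y i)

theorem map_ghostForm {R S A B : Type*} [CommRing R] [CommRing S] [CommRing A] [CommRing B]
    [Algebra R S] [Algebra R A] [Algebra R B] [Algebra S B] [Algebra A B] [IsScalarTower R A B]
    [IsScalarTower R S B] [SMulCommClass S A B] (p m : ℕ) (y : ℕ → A) :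
    KaehlerDifferential.map R S A B (ghostForm R p m y) =
      ghostForm S p m fun i ↦ algebraMap A B (y i) := by
  simp only [ghostForm, map_sum, map_smul, KaehlerDifferential.map_D, ← map_pow, algebraMap_smul]

theorem liftKaehlerDifferential_ghostForm {R A : Type*} [CommRing R] [CommRing A] [Algebra R A]
    (D : Derivation R A A) (p m : ℕ) (y : ℕ → A) :
    D.liftKaehlerDifferential (ghostForm R p m y) =
      ∑ i ∈ range (m + 1), y i ^ (p ^ (m - i) - 1) * D (y i) := by
  simp [ghostForm]

theorem D_ghostComponent {p : ℕ} [Fact p.Prime] {R A : Type*} [CommRing R] [CommRing A]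
    [Algebra R A] (m : ℕ) (w : WittVector p A) :
    KaehlerDifferential.D R A (WittVector.ghostComponent m w) =
      p ^ m • ghostForm R p m w.coeff := by
  rw [WittVector.ghostComponent_apply, aeval_wittPolynomial, map_sum, ghostForm, smul_sum]
  refine sum_congr rfl fun i hi ↦ ?_
  rw [← Nat.cast_pow p i, ← nsmul_eq_mul, map_nsmul, Derivation.leibniz_pow, ← mul_smul, ← pow_add,
    Nat.add_sub_cancel' (mem_range_succ_iff.1 hi)]

end GhostForm

section Cartier

variable {p : ℕ} [hp : Fact p.Prime]

theorem isReduced_of_perfectRing (p : ℕ) [hp : Fact p.Prime] (k : Type*) [CommRing k] [CharP k p]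
    [PerfectRing k p] : IsReduced k :=
  (isReduced_iff_pow_one_lt p hp.out.one_lt).2 fun x hx ↦
    injective_frobenius k p (by rw [frobenius_def, hx, map_zero])

theorem exists_pow_eq_of_ghostForm_eq_zero_of_etale {k A σ : Type*} [CommRing k] [CharP k p]
    [PerfectRing k p] [CommRing A] [CharP A p] [Algebra k A] [Finite σ]
    [Algebra (MvPolynomial σ k) A] [IsScalarTower k (MvPolynomial σ k) A]
    [Algebra.Etale (MvPolynomial σ k) A] {m : ℕ} {y : ℕ → A} (hy : ghostForm k p m y = 0) {i : ℕ}
    (hi : i ≤ m) : ∃ v, v ^ p = y i := by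
  have : IsReduced k := isReduced_of_perfectRing p k
  have : IsReduced A := FrobeniusPushforward.isReduced_of_etale p (MvPolynomial σ k)
  refine FrobeniusPushforward.exists_pow_eq_of_derivation_eq_zero
    (fun j : σ ↦ extendDerivation_algebraMap (A := A) (MvPolynomial.pderiv (R := k) j))
    (fun x ↦ exists_pow_eq_of_pderiv_eq_zero) fun j ↦ ?_
  refine map_eq_zero_of_sum_pow_mul_eq_zero
    (iterate_char_extendDerivation (charIterate_pderiv j)) ?_ i hi
  rw [← liftKaehlerDifferential_ghostForm, hy, map_zero]

theorem exists_span_eq_top_etale_mvPolynomial (k A : Type*) [CommRing k] [CommRing A] [Algebra k A]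
    [Algebra.Smooth k A] : ∃ s : Set A, Ideal.span s = ⊤ ∧ ∀ g ∈ s,
      ∃ (d : ℕ) (_ : Algebra (MvPolynomial (Fin d) k) (Localization.Away g)),
        IsScalarTower k (MvPolynomial (Fin d) k) (Localization.Away g) ∧
        Algebra.Etale (MvPolynomial (Fin d) k) (Localization.Away g) := by
  obtain ⟨s, hs, hstd⟩ := Algebra.Smooth.exists_span_eq_top_isStandardSmooth k A
  refine ⟨s, hs, fun g hg ↦ ?_⟩
  obtain ⟨d, e, he, hetale⟩ :=
    (RingHom.isStandardSmooth_algebraMap.2 (hstd g hg)).exists_etale_mvPolynomial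
  let := e.toAlgebra
  exact ⟨d, this, .of_algebraMap_eq' he.symm, hetale⟩

theorem isReduced_of_smooth (p : ℕ) [hp : Fact p.Prime] (k : Type*) {A : Type*} [CommRing k]
    [CharP k p] [PerfectRing k p] [CommRing A] [Algebra k A] [Algebra.Smooth k A] :
    IsReduced A := by
  have : IsReduced k := isReduced_of_perfectRing p k
  obtain ⟨s, hs, hetale⟩ := exists_span_eq_top_etale_mvPolynomial k A
  refine ⟨fun x hx ↦ Module.eq_zero_of_isLocalized_span s hs (fun g ↦ Localization.Away g.1)
    (fun g ↦ Algebra.linearMap A (Localization.Away g.1)) x fun g ↦ ?_⟩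
  obtain ⟨d, _, _, _⟩ := hetale g g.2
  rcases subsingleton_or_nontrivial (Localization.Away g.1) with _ | _
  · exact Subsingleton.elim _ _
  have : CharP (Localization.Away g.1) p := charP_of_algebra k _ p
  have := FrobeniusPushforward.isReduced_of_etale p (MvPolynomial (Fin d) k)
    (A := Localization.Away g.1)
  exact (hx.map (algebraMap A (Localization.Away g.1))).eq_zero

theorem exists_pow_char_eq_of_localization_span {A : Type*} [CommRing A] [CharP A p] {s : Set A}
    (hs : Ideal.span s = ⊤) {a : A}
    (h : ∀ g ∈ s, ∃ v : Localization.Away g, v ^ p = algebraMap A _ a) : ∃ b, b ^ p = a := by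
  let J : Ideal A :=
    { carrier := {g | ∃ v, v ^ p = g ^ p * a}
      zero_mem' := ⟨0, by simp [hp.out.ne_zero]⟩
      add_mem' := fun ⟨v, hv⟩ ⟨w, hw⟩ ↦
        ⟨v + w, by rw [add_pow_char, add_pow_char, hv, hw, add_mul]⟩
      smul_mem' := fun c _ ⟨v, hv⟩ ↦ ⟨c * v, by rw [mul_pow, hv, smul_eq_mul, mul_pow, mul_assoc]⟩ }
  suffices hJ : (1 : A) ∈ J by
    obtain ⟨b, hb⟩ := hJ
    exact ⟨b, by rw [hb, one_pow, one_mul]⟩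
  rw [← Ideal.eq_top_iff_one, ← Ideal.radical_eq_top, eq_top_iff, ← hs, Ideal.span_le]
  intro g hg
  obtain ⟨v, hv⟩ := h g hg
  obtain ⟨N, b, hb⟩ := IsLocalization.Away.surj g v
  have heq : algebraMap A (Localization.Away g) (g ^ (N * p) * a) = algebraMap A _ (b ^ p) := by
    rw [map_mul, ← hv, map_pow _ b, ← hb, mul_pow, map_pow, ← pow_mul, mul_comm]
  obtain ⟨M, hM⟩ := IsLocalization.Away.exists_of_eq g heq
  refine ⟨M + N, g ^ M * b, ?_⟩
  calc (g ^ M * b) ^ p = g ^ (M * (p - 1)) * (g ^ M * b ^ p) := by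
        rw [← mul_assoc, ← pow_add, ← Nat.mul_add_one, Nat.sub_add_cancel hp.out.one_le, mul_pow,
          pow_mul]
    _ = (g ^ (M + N)) ^ p * a := by
        rw [← hM, ← mul_assoc, ← pow_add, ← Nat.mul_add_one, Nat.sub_add_cancel hp.out.one_le,
          ← mul_assoc, ← pow_add, ← pow_mul, add_mul]

theorem exists_pow_eq_of_ghostForm_eq_zero {k A : Type*} [CommRing k] [CharP k p]
    [PerfectRing k p] [CommRing A] [Algebra k A] [Algebra.Smooth k A] {m : ℕ} {y : ℕ → A}
    (hy : ghostForm k p m y = 0) {i : ℕ} (hi : i ≤ m) : ∃ v, v ^ p = y i := by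
  rcases subsingleton_or_nontrivial A with _ | _
  · exact ⟨0, Subsingleton.elim _ _⟩
  have : CharP A p := charP_of_algebra k A p
  obtain ⟨s, hs, hetale⟩ := exists_span_eq_top_etale_mvPolynomial k A
  refine exists_pow_char_eq_of_localization_span hs fun g hg ↦ ?_
  obtain ⟨d, _, _, _⟩ := hetale g hg
  rcases subsingleton_or_nontrivial (Localization.Away g) with _ | _
  · exact ⟨0, Subsingleton.elim _ _⟩
  have : CharP (Localization.Away g) p := charP_of_algebra k _ p
  refine exists_pow_eq_of_ghostForm_eq_zero_of_etale (k := k) (σ := Fin d)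
    (y := fun i ↦ algebraMap A _ (y i)) ?_ hi
  rw [← map_ghostForm (R := k), hy, map_zero]

end Cartier

section DivisibleTorsion

/-- For every `m < n`, the `p ^ m`-torsion of `M` is contained in `p M`. Free modules over the
truncated Witt vectors `W_n(k)` of a perfect ring `k` have this property, and, unlike freeness,
it only refers to the underlying group. -/
def HasDivisibleTorsion (p n : ℕ) (M : Type*) [AddMonoid M] : Prop :=
  ∀ m < n, ∀ x : M, p ^ m • x = 0 → ∃ z, x = p • z

theorem HasDivisibleTorsion.of_flat {p n : ℕ} {R : Type*} (M : Type*) [CommRing R]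
    [AddCommGroup M] [Module R M] [Module.Flat R M] (h : HasDivisibleTorsion p n R) :
    HasDivisibleTorsion p n M := by
  intro m hm x hx
  obtain ⟨κ, a, y, hxy, ha⟩ := Module.Flat.isTrivialRelation_of_sum_smul_eq_zero (R := R)
    (ι := Fin 1) (f := fun _ ↦ ((p ^ m : ℕ) : R)) (x := fun _ ↦ x)
    (by simpa only [univ_unique, sum_const, card_singleton, one_smul, Nat.cast_smul_eq_nsmul])
  have hdvd (j) : ∃ b, a 0 j = p • b :=
    h m hm _ (by simpa only [Fin.sum_univ_one, nsmul_eq_mul] using ha j)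
  choose b hb using hdvd
  refine ⟨∑ j, b j • y j, (hxy 0).trans ?_⟩
  simp only [hb, smul_assoc, smul_sum]

end DivisibleTorsion

section TruncatedWittVector

variable {p : ℕ} [hp : Fact p.Prime] {n : ℕ}

theorem twMap_truncate {R S : Type*} [CommRing R] [CommRing S] (f : R →+* S)
    (x : WittVector p R) :
    twMap p n f (WittVector.truncate n x) = WittVector.truncate n (WittVector.map f x) :=
  RingHom.liftOfRightInverse_comp_apply (WittVector.truncate n) TruncatedWittVector.out
    TruncatedWittVector.truncateFun_out
    ⟨(WittVector.truncate n).comp (WittVector.map f), _⟩ x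

/-- The residue homomorphism `W_n(R) → R` taking a truncated Witt vector to its zeroth
coefficient. -/
noncomputable def coeffZero (p : ℕ) [Fact p.Prime] {n : ℕ} (hn : 0 < n) (R : Type*) [CommRing R] :
    TruncatedWittVector p n R →+* R :=
  (WittVector.truncate n).liftOfRightInverse TruncatedWittVector.out
    TruncatedWittVector.truncateFun_out
    ⟨WittVector.constantCoeff, fun x hx ↦ (WittVector.mem_ker_truncate n x).1 hx 0 hn⟩

theorem coeffZero_truncate {R : Type*} [CommRing R] (hn : 0 < n) (x : WittVector p R) :
    coeffZero p hn R (WittVector.truncate n x) = x.coeff 0 :=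
  RingHom.liftOfRightInverse_comp_apply (WittVector.truncate n) TruncatedWittVector.out
    TruncatedWittVector.truncateFun_out ⟨WittVector.constantCoeff, _⟩ x

theorem coeffZero_apply {R : Type*} [CommRing R] (hn : 0 < n) (c : TruncatedWittVector p n R) :
    coeffZero p hn R c = c.coeff ⟨0, hn⟩ := by
  obtain ⟨x, rfl⟩ := WittVector.truncate_surjective p n R c
  rw [coeffZero_truncate, WittVector.coeff_truncate]

theorem coeffZero_surjective {R : Type*} [CommRing R] (hn : 0 < n) :
    Function.Surjective (coeffZero p hn R) := fun a ↦
  ⟨WittVector.truncate n (WittVector.teichmuller p a), by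
    rw [coeffZero_truncate, WittVector.teichmuller_coeff_zero]⟩

variable {k : Type*} [CommRing k] [CharP k p]

theorem natCast_pow_eq_zero : (p : TruncatedWittVector p n k) ^ n = 0 := by
  rw [← map_natCast (WittVector.truncate n), ← map_pow, ← RingHom.mem_ker,
    WittVector.mem_ker_truncate]
  intro i hi
  simpa only [one_mul] using WittVector.mul_pow_charP_coeff_zero (1 : WittVector p k) hi

theorem hasDivisibleTorsion_truncatedWittVector [PerfectRing k p] :
    HasDivisibleTorsion p n (TruncatedWittVector p n k) := by
  intro m hm a ha
  have : IsReduced k := isReduced_of_perfectRing p k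
  obtain ⟨x, rfl⟩ := WittVector.truncate_surjective p n k a
  have hcoeff : (x * (p : WittVector p k) ^ m).coeff m = 0 := by
    refine (WittVector.mem_ker_truncate n _).1 ?_ m hm
    rw [RingHom.mem_ker, mul_comm, ← Nat.cast_pow, ← nsmul_eq_mul, map_nsmul, ha]
  have hx : x ∈ RingHom.ker WittVector.constantCoeff := by
    have hpow := WittVector.mul_pow_charP_coeff_succ x (m := 0) (n := m)
    rw [zero_add, hcoeff] at hpow
    exact eq_zero_of_pow_eq_zero hpow.symm
  rw [WittVector.ker_constantCoeff, Ideal.mem_span_singleton] at hx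
  obtain ⟨y, rfl⟩ := hx
  exact ⟨WittVector.truncate n y, by rw [← nsmul_eq_mul, map_nsmul]⟩

end TruncatedWittVector

section GhostComponent

variable {p : ℕ} [hp : Fact p.Prime] {n m : ℕ} {R : Type*} [CommRing R] {w : WittVector p R}

theorem ghostComponent_eq_sum_range (m : ℕ) (w : WittVector p R) :
    WittVector.ghostComponent m w =
      ∑ i ∈ range (m + 1), (p : R) ^ i * w.coeff i ^ p ^ (m - i) := by
  rw [WittVector.ghostComponent_apply, aeval_wittPolynomial]

theorem ghostComponent_eq_sum_fin_of_pow_eq_zero (hpn : (p : R) ^ n = 0) (w : WittVector p R) :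
    WittVector.ghostComponent n w =
      ∑ i : Fin n, (p : R) ^ (i : ℕ) * w.coeff i ^ p ^ (n - (i : ℕ)) := by
  rw [ghostComponent_eq_sum_range, sum_range_succ, hpn, zero_mul, add_zero, sum_range]

theorem pow_succ_dvd_pow_mul_pow {a : R} (ha : (p : R) ∣ a) {i : ℕ} (hi : i ≤ n) :
    (p : R) ^ (n + 1) ∣ (p : R) ^ i * a ^ p ^ (n - i) := by
  have hlt : n - i < p ^ (n - i) := Nat.lt_pow_self hp.out.one_lt
  calc (p : R) ^ (n + 1) ∣ (p : R) ^ (i + p ^ (n - i)) := pow_dvd_pow _ (by omega)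
    _ = (p : R) ^ i * (p : R) ^ p ^ (n - i) := pow_add ..
    _ ∣ (p : R) ^ i * a ^ p ^ (n - i) := mul_dvd_mul_left _ (pow_dvd_pow_of_dvd ha _)

theorem ghostComponent_eq_zero_of_dvd_coeff (hpn : (p : R) ^ n = 0)
    (hw : ∀ i < n, (p : R) ∣ w.coeff i) : WittVector.ghostComponent n w = 0 := by
  rw [ghostComponent_eq_sum_fin_of_pow_eq_zero hpn]
  refine sum_eq_zero fun i _ ↦ zero_dvd_iff.1 ?_
  rw [← zero_mul (p : R), ← hpn, ← pow_succ]
  exact pow_succ_dvd_pow_mul_pow (hw i i.2) i.2.le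

theorem dvd_coeff_of_ghostComponent_eq_zero (hR : HasDivisibleTorsion p n R)
    (hrad : IsRadical (p : R)) (hw : WittVector.ghostComponent n w = 0) {i : ℕ} (hi : i < n) :
    (p : R) ∣ w.coeff i := by
  induction i using Nat.strong_induction_on with
  | _ i ih =>
    have hrest : (p : R) ^ (i + 1) ∣
        ∑ j ∈ (range (n + 1)).erase i, (p : R) ^ j * w.coeff j ^ p ^ (n - j) := by
      refine dvd_sum fun j hj ↦ ?_
      obtain ⟨hne, hj⟩ := mem_erase.1 hj
      rcases hne.lt_or_gt with hlt | hgt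
      · exact (pow_dvd_pow _ (by omega)).trans
          (pow_succ_dvd_pow_mul_pow (ih j hlt (hlt.trans hi)) (mem_range_succ_iff.1 hj))
      · exact (pow_dvd_pow _ hgt).mul_right _
    obtain ⟨c, hc⟩ := hrest
    obtain ⟨z, hz⟩ := hR i hi (w.coeff i ^ p ^ (n - i) + p * c) <| by
      rw [nsmul_eq_mul, Nat.cast_pow, mul_add, ← mul_assoc, ← pow_succ, ← hc, ← hw,
        ghostComponent_eq_sum_range]
      exact add_sum_erase _ (fun j ↦ (p : R) ^ j * w.coeff j ^ p ^ (n - j))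
        (mem_range.2 (hi.trans n.lt_succ_self))
    refine hrad (p ^ (n - i)) _ ((dvd_add_left (dvd_mul_right (p : R) c)).1 ?_)
    rw [hz, nsmul_eq_mul]
    exact dvd_mul_right _ _

theorem exists_ghostComponent_succ_eq (hw : ∀ i ≤ m, ∃ v, (p : R) ∣ w.coeff i - v ^ p) :
    ∃ w' : WittVector p R,
      WittVector.ghostComponent (m + 1) w' = WittVector.ghostComponent m w := by
  choose! v hv using hw
  have hdvd : (p : R) ^ (m + 1) ∣ WittVector.ghostComponent m w -
      ∑ i ∈ range (m + 1), (p : R) ^ i * v i ^ p ^ (m + 1 - i) := by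
    rw [ghostComponent_eq_sum_range, ← sum_sub_distrib]
    refine dvd_sum fun i hi ↦ ?_
    obtain ⟨j, rfl⟩ := Nat.exists_eq_add_of_le (mem_range_succ_iff.1 hi)
    rw [← mul_sub, add_assoc, pow_add, Nat.add_sub_cancel_left, Nat.add_sub_cancel_left,
      pow_succ' p j, pow_mul]
    exact mul_dvd_mul_left _ (dvd_sub_pow_of_dvd_sub (hv i (Nat.le_add_right i j)) j)
  obtain ⟨c, hc⟩ := hdvd
  refine ⟨.mk p fun i ↦ if i ≤ m then v i else c, ?_⟩
  calc WittVector.ghostComponent (m + 1) (.mk p fun i ↦ if i ≤ m then v i else c)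
      = ∑ i ∈ range (m + 1), (p : R) ^ i * v i ^ p ^ (m + 1 - i) + (p : R) ^ (m + 1) * c := by
        rw [ghostComponent_eq_sum_range, sum_range_succ]
        congr 1
        · refine sum_congr rfl fun i hi ↦ ?_
          rw [WittVector.coeff_mk, if_pos (mem_range_succ_iff.1 hi)]
        · simp
    _ = WittVector.ghostComponent m w := by rw [← hc, add_sub_cancel]

theorem exists_ghostComponent_eq_of_D_eq_smul {S : Type*} [CommRing S] [Algebra S R]
    (hΩ : HasDivisibleTorsion p n Ω[R⁄S])
    (hcartier : ∀ (m : ℕ) (y : ℕ → R) (η : Ω[R⁄S]), ghostForm S p m y = p • η →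
      ∀ i ≤ m, ∃ v, (p : R) ∣ y i - v ^ p)
    (hm : m ≤ n) {z : R} {η : Ω[R⁄S]} (hz : KaehlerDifferential.D S R z = p ^ m • η) :
    ∃ w : WittVector p R, WittVector.ghostComponent m w = z := by
  induction m generalizing η with
  | zero => exact ⟨WittVector.teichmuller p z, by
      rw [WittVector.ghostComponent_teichmuller, pow_zero, pow_one]⟩
  | succ m ih =>
    rw [pow_succ, mul_smul] at hz
    obtain ⟨w, rfl⟩ := ih (Nat.le_of_succ_le hm) hz
    rw [D_ghostComponent, ← sub_eq_zero, ← smul_sub] at hz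
    obtain ⟨ζ, hζ⟩ := hΩ m hm _ hz
    refine exists_ghostComponent_succ_eq (hcartier m w.coeff (ζ + η) ?_)
    rw [smul_add, ← hζ, sub_add_cancel]

end GhostComponent

section TildeF

variable {p : ℕ} [hp : Fact p.Prime] {n : ℕ} {A' A : Type*} [CommRing A'] [CommRing A]

theorem forall_lift_iff_forall_ghostComponent (hpn : (p : A') ^ n = 0) {π : A' →+* A}
    {F : TruncatedWittVector p n A →+* A'} :
    (∀ (x : TruncatedWittVector p n A) (y : Fin n → A'), (∀ i, π (y i) = x.coeff i) →
      F x = ∑ i : Fin n, (p : A') ^ (i : ℕ) * y i ^ p ^ (n - (i : ℕ))) ↔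
    ∀ w : WittVector p A',
      F (WittVector.truncate n (WittVector.map π w)) = WittVector.ghostComponent n w := by
  simp only [ghostComponent_eq_sum_fin_of_pow_eq_zero hpn]
  refine ⟨fun h w ↦ h _ _ fun i ↦ ?_, fun h x y hxy ↦ ?_⟩
  · rw [WittVector.coeff_truncate, WittVector.map_coeff]
  · let w : WittVector p A' := .mk p fun i ↦ if hi : i < n then y ⟨i, hi⟩ else 0
    have hw (i : Fin n) : w.coeff i = y i := by simp [w]
    have hx : WittVector.truncate n (WittVector.map π w) = x := by
      ext i
      rw [WittVector.coeff_truncate, WittVector.map_coeff, hw, hxy]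
    simp only [← hx, h w, hw]

theorem truncate_comp_map_surjective {π : A' →+* A} (hπ : Function.Surjective π) :
    Function.Surjective ((WittVector.truncate (p := p) n).comp (WittVector.map π)) :=
  (WittVector.truncate_surjective p n A).comp (WittVector.map_surjective π hπ)

theorem truncate_map_eq_zero_iff {π : A' →+* A} (hker : RingHom.ker π = Ideal.span {(p : A')})
    {w : WittVector p A'} :
    WittVector.truncate n (WittVector.map π w) = 0 ↔ ∀ i < n, (p : A') ∣ w.coeff i := by
  rw [← RingHom.mem_ker, WittVector.mem_ker_truncate]
  simp only [WittVector.map_coeff, ← RingHom.mem_ker, hker, Ideal.mem_span_singleton]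

/-- The map `F̃ⁿ : W_n(A) → A'` of Illusie–Raynaud: the `n`-th ghost component on `W(A')`, which
factors through the surjection `W(A') → W_n(A)` because `p ^ n = 0` in `A'`. -/
noncomputable def tildeF (hpn : (p : A') ^ n = 0) {π : A' →+* A} (hπ : Function.Surjective π)
    (hker : RingHom.ker π = Ideal.span {(p : A')}) : TruncatedWittVector p n A →+* A' :=
  ((WittVector.truncate n).comp (WittVector.map π)).liftOfSurjective
    (truncate_comp_map_surjective hπ)
    ⟨WittVector.ghostComponent n, fun _ hw ↦
      ghostComponent_eq_zero_of_dvd_coeff hpn ((truncate_map_eq_zero_iff hker).1 hw)⟩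

variable (hpn : (p : A') ^ n = 0) {π : A' →+* A} (hπ : Function.Surjective π)
  (hker : RingHom.ker π = Ideal.span {(p : A')})

theorem tildeF_truncate_map (w : WittVector p A') :
    tildeF hpn hπ hker (WittVector.truncate n (WittVector.map π w)) =
      WittVector.ghostComponent n w :=
  RingHom.liftOfRightInverse_comp_apply ((WittVector.truncate n).comp (WittVector.map π)) _
    (Function.rightInverse_surjInv (truncate_comp_map_surjective hπ))
    ⟨WittVector.ghostComponent n, _⟩ w

theorem eq_tildeF {F : TruncatedWittVector p n A →+* A'}
    (hF : ∀ w : WittVector p A',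
      F (WittVector.truncate n (WittVector.map π w)) = WittVector.ghostComponent n w) :
    F = tildeF hpn hπ hker := by
  refine RingHom.cancel_right (truncate_comp_map_surjective hπ) |>.1 (RingHom.ext fun w ↦ ?_)
  exact (hF w).trans (tildeF_truncate_map hpn hπ hker w).symm

theorem tildeF_injective (hA' : HasDivisibleTorsion p n A') [IsReduced A] :
    Function.Injective (tildeF hpn hπ hker) := by
  have hrad : IsRadical (p : A') := by
    rwa [isRadical_iff_span_singleton, ← hker, RingHom.ker_isRadical_iff_reduced_of_surjective hπ]
  refine (injective_iff_map_eq_zero _).2 fun x hx ↦ ?_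
  obtain ⟨w, rfl⟩ := truncate_comp_map_surjective hπ x
  rw [RingHom.comp_apply, tildeF_truncate_map] at hx
  exact (truncate_map_eq_zero_iff hker).2 fun i hi ↦
    dvd_coeff_of_ghostComponent_eq_zero hA' hrad hx hi

theorem exists_tildeF_eq_iff {z : A'} :
    (∃ x, tildeF hpn hπ hker x = z) ↔
      ∃ w : WittVector p A', WittVector.ghostComponent n w = z := by
  rw [(truncate_comp_map_surjective (p := p) (n := n) hπ).exists]
  simp only [RingHom.comp_apply, tildeF_truncate_map]

theorem exists_tildeF_eq_iff_D_eq_zero {W : Type*} [CommRing W] [Algebra W A']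
    (hΩ : HasDivisibleTorsion p n Ω[A'⁄W])
    (hcartier : ∀ (m : ℕ) (y : ℕ → A') (η : Ω[A'⁄W]), ghostForm W p m y = p • η →
      ∀ i ≤ m, ∃ v, (p : A') ∣ y i - v ^ p) {z : A'} :
    (∃ x, tildeF hpn hπ hker x = z) ↔ KaehlerDifferential.D W A' z = 0 := by
  rw [exists_tildeF_eq_iff]
  refine ⟨?_, fun hz ↦ exists_ghostComponent_eq_of_D_eq_smul hΩ hcartier le_rfl (η := 0) ?_⟩
  · rintro ⟨w, rfl⟩
    rw [D_ghostComponent, ← Nat.cast_smul_eq_nsmul A', Nat.cast_pow, hpn, zero_smul]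
  · rw [hz, smul_zero]

theorem tildeF_twMap {k : Type*} [CommRing k] [CharP k p] [PerfectRing k p]
    [Algebra (TruncatedWittVector p n k) A'] (hn : 0 < n) (f : k →+* A)
    (hf : ∀ c, π (algebraMap (TruncatedWittVector p n k) A' c) = f (coeffZero p hn k c))
    (c : TruncatedWittVector p n k) :
    tildeF hpn hπ hker (twMap p n f c) =
      algebraMap (TruncatedWittVector p n k) A' (twMap p n (iterateFrobenius k p n) c) := by
  let T : WittVector p k →+* TruncatedWittVector p n k := WittVector.truncate n
  suffices h : (tildeF hpn hπ hker).comp ((twMap p n f).comp T) =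
      (algebraMap _ A').comp ((twMap p n (iterateFrobenius k p n)).comp T) by
    obtain ⟨x, rfl⟩ := WittVector.truncate_surjective p n k c
    exact DFunLike.congr_fun h x
  refine WittVector.eq_of_apply_teichmuller_eq _ _ ⟨n, hpn⟩ fun b ↦ ?_
  have hb : f b = π (algebraMap _ A' (T (WittVector.teichmuller p b))) := by
    rw [hf, coeffZero_truncate, WittVector.teichmuller_coeff_zero]
  simp only [RingHom.comp_apply, T, twMap_truncate, WittVector.map_teichmuller]
  rw [hb, ← WittVector.map_teichmuller, tildeF_truncate_map, WittVector.ghostComponent_teichmuller,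
    iterateFrobenius_def, map_pow, map_pow, map_pow]

end TildeF

section Reduction

theorem smooth_of_surjective {W k A' A : Type*} [CommRing W] [CommRing k] [CommRing A']
    [CommRing A] [Algebra W k] [Algebra W A'] [Algebra W A] [Algebra k A] [Algebra A' A]
    [IsScalarTower W k A] [IsScalarTower W A' A] [Algebra.Smooth W A']
    (hk : Function.Surjective (algebraMap W k)) (hA : Function.Surjective (algebraMap A' A))
    (hker : RingHom.ker (algebraMap A' A) ≤
      (RingHom.ker (algebraMap W k)).map (algebraMap W A')) :
    Algebra.Smooth k A := by
  let ρ : k ⊗[W] A' →ₐ[k] A := Algebra.TensorProduct.lift (Algebra.ofId k A)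
    (IsScalarTower.toAlgHom W A' A) fun _ _ ↦ .all _ _
  have hρ (a : A') : ρ (1 ⊗ₜ a) = algebraMap A' A a := by
    simp [ρ]
  have htmul : Function.Surjective fun a : A' ↦ (1 : k) ⊗ₜ[W] a :=
    Algebra.TensorProduct.includeRight_surjective A' hk
  have hzero {a : A'} (ha : algebraMap A' A a = 0) : (1 : k) ⊗ₜ[W] a = 0 := by
    have hle : (RingHom.ker (algebraMap W k)).map (algebraMap W A') ≤
        RingHom.ker (Algebra.TensorProduct.includeRight : A' →ₐ[W] k ⊗[W] A') := by
      refine Ideal.map_le_iff_le_comap.2 fun c hc ↦ ?_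
      rw [Ideal.mem_comap, RingHom.mem_ker, AlgHom.commutes, IsScalarTower.algebraMap_apply W k,
        (RingHom.mem_ker).1 hc, map_zero]
    exact hle (hker ha)
  refine Algebra.Smooth.of_equiv (AlgEquiv.ofBijective ρ ⟨?_, fun a ↦ ?_⟩)
  · refine (injective_iff_map_eq_zero ρ).2 fun x hx ↦ ?_
    obtain ⟨a, rfl⟩ := htmul x
    exact hzero ((hρ a).symm.trans hx)
  · obtain ⟨a, rfl⟩ := hA a
    exact ⟨1 ⊗ₜ a, hρ a⟩

theorem exists_dvd_sub_pow_of_ghostForm_eq_smul {p : ℕ} [Fact p.Prime] {W k A' A : Type*}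
    [CommRing W] [CommRing k] [CharP k p] [PerfectRing k p] [CommRing A'] [CommRing A]
    [Algebra W k] [Algebra W A'] [Algebra W A] [Algebra k A] [Algebra A' A]
    [IsScalarTower W k A] [IsScalarTower W A' A] [Algebra.Smooth k A]
    (hA : Function.Surjective (algebraMap A' A))
    (hker : RingHom.ker (algebraMap A' A) = Ideal.span {(p : A')}) {m : ℕ} {y : ℕ → A'}
    {η : Ω[A'⁄W]} (hy : ghostForm W p m y = p • η) {i : ℕ} (hi : i ≤ m) :
    ∃ v, (p : A') ∣ y i - v ^ p := by
  have hpA : (p : A) = 0 := by rw [← map_natCast (algebraMap k A), CharP.cast_eq_zero, map_zero]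
  have hzero : ghostForm k p m (fun i ↦ algebraMap A' A (y i)) = 0 := by
    rw [← map_ghostForm (R := W), hy, map_nsmul, ← Nat.cast_smul_eq_nsmul A, hpA, zero_smul]
  obtain ⟨v, hv⟩ := exists_pow_eq_of_ghostForm_eq_zero hzero hi
  obtain ⟨v, rfl⟩ := hA v
  refine ⟨v, ?_⟩
  rw [← Ideal.mem_span_singleton, ← hker, RingHom.mem_ker, map_sub, map_pow, hv, sub_self]

theorem isReduced_and_exists_dvd_sub_pow {p : ℕ} [Fact p.Prime] {W k A' A : Type*}
    [CommRing W] [CommRing k] [CharP k p] [PerfectRing k p] [CommRing A'] [CommRing A]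
    [Algebra W A'] [Algebra.Smooth W A'] (ε : W →+* k) (hε : Function.Surjective ε) (π : A' →+* A)
    (hπ : Function.Surjective π) (hker : RingHom.ker π = Ideal.span {(p : A')}) (f : k →+* A)
    (hf : ∀ c, π (algebraMap W A' c) = f (ε c)) :
    IsReduced A ∧ ∀ (m : ℕ) (y : ℕ → A') (η : Ω[A'⁄W]), ghostForm W p m y = p • η →
      ∀ i ≤ m, ∃ v, (p : A') ∣ y i - v ^ p := by
  algebraize [ε, π, f, f.comp ε]
  have : IsScalarTower W A' A := .of_algebraMap_eq fun c ↦ (hf c).symm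
  have hle : RingHom.ker π ≤ (RingHom.ker ε).map (algebraMap W A') := by
    rw [hker, Ideal.span_singleton_le_iff_mem, ← map_natCast (algebraMap W A')]
    exact Ideal.mem_map_of_mem _ (by rw [RingHom.mem_ker, map_natCast, CharP.cast_eq_zero])
  have : Algebra.Smooth k A := smooth_of_surjective hε hπ hle
  exact ⟨isReduced_of_smooth p k, fun _ _ _ hy _ hi ↦
    exists_dvd_sub_pow_of_ghostForm_eq_smul (k := k) hπ hker hy hi⟩

end Reduction

end TildeF

theorem tildeFn_exists_general (p : ℕ) [Fact p.Prime]
    {k : Type*} [CommRing k] [CharP k p] [PerfectRing k p]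
    (n : ℕ) (hn : 0 < n)
    {A' : Type*} [CommRing A'] [Algebra (TruncatedWittVector p n k) A']
    [Algebra.Smooth (TruncatedWittVector p n k) A']
    {A : Type*} [CommRing A] (π : A' →+* A)
    (hπsurj : Function.Surjective π)
    (hπker : RingHom.ker π = Ideal.span {(p : A')})
    (f : k →+* A)
    (hf : ∀ c : TruncatedWittVector p n k,
      π (algebraMap (TruncatedWittVector p n k) A' c) = f (c.coeff ⟨0, hn⟩)) :
    ∃ F : TruncatedWittVector p n A →+* A',
      (∀ (x : TruncatedWittVector p n A) (y : Fin n → A'),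
          (∀ i, π (y i) = x.coeff i) →
          F x = ∑ i : Fin n, (p : A') ^ (i : ℕ) * y i ^ p ^ (n - (i : ℕ))) ∧
      (∀ F' : TruncatedWittVector p n A →+* A',
          (∀ (x : TruncatedWittVector p n A) (y : Fin n → A'),
            (∀ i, π (y i) = x.coeff i) →
            F' x = ∑ i : Fin n, (p : A') ^ (i : ℕ) * y i ^ p ^ (n - (i : ℕ))) →
          F' = F) ∧
      (∀ (c : TruncatedWittVector p n k) (x : TruncatedWittVector p n A),
          F (twMap p n f c * x) =
            algebraMap (TruncatedWittVector p n k) A'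
              (twMap p n (iterateFrobenius k p n) c) * F x) ∧
      Function.Injective F ∧
      (∀ z : A', (∃ x, F x = z) ↔
        KaehlerDifferential.D (TruncatedWittVector p n k) A' z = 0) := by
  let W := TruncatedWittVector p n k
  have hf' (c : W) : π (algebraMap W A' c) = f (TildeF.coeffZero p hn k c) := by
    rw [hf, TildeF.coeffZero_apply]
  have hpn : (p : A') ^ n = 0 := by
    rw [← map_natCast (algebraMap W A'), ← map_pow, TildeF.natCast_pow_eq_zero, map_zero]
  have hW : TildeF.HasDivisibleTorsion p n W := TildeF.hasDivisibleTorsion_truncatedWittVector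
  have hflat : Module.Flat W Ω[A'⁄W] := .trans W A' _
  obtain ⟨hreduced, hcartier⟩ := TildeF.isReduced_and_exists_dvd_sub_pow
    (TildeF.coeffZero p hn k) (TildeF.coeffZero_surjective hn) π hπsurj hπker f hf'
  refine ⟨TildeF.tildeF hpn hπsurj hπker,
    (TildeF.forall_lift_iff_forall_ghostComponent hpn).2 (TildeF.tildeF_truncate_map _ _ _),
    fun F' hF' ↦ TildeF.eq_tildeF _ _ _ ((TildeF.forall_lift_iff_forall_ghostComponent hpn).1 hF'),
    fun c x ↦ ?_, TildeF.tildeF_injective _ _ _ (hW.of_flat A'),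
    fun z ↦ TildeF.exists_tildeF_eq_iff_D_eq_zero _ _ _ (hW.of_flat _) hcartier⟩
  rw [map_mul, TildeF.tildeF_twMap hpn hπsurj hπker hn f hf']

/-- the map `F̃ⁿ` of Illusie–Raynaud, affine form.  Let `k` be a perfect
field of characteristic `p`, `n ≥ 1`, `A′` a smooth `W_n(k)`-algebra and `π : A′ → A` a
surjective ring homomorphism with kernel `pA′` (so `A = A′/pA′`); let `f : k → A` be the
structure map, characterized by `π ∘ algebraMap = f ∘ (coeff 0)`.  Then there is a (unique)
ring homomorphism `F̃ⁿ : W_n(A) → A′` with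
`F̃ⁿ (x₁,…,x_n) = ∑_{i=0}^{n-1} pⁱ · (x̃_{i+1})^{p^{n-i}}` for arbitrary coefficient lifts
`x̃_j` along `π`; it is semilinear over the `n`-th iterate `Φⁿ` of the Witt vector Frobenius
of `W_n(k)`, injective, and its image is the kernel of the universal derivation
`d : A′ → Ω¹_{A′/W_n(k)}`. -/
theorem tildeFn_exists (p : ℕ) [Fact p.Prime]
    (k : Type u) [Field k] [CharP k p] [PerfectRing k p]
    (n : ℕ) (hn : 0 < n)
    (A' : Type u) [CommRing A'] [Algebra (TruncatedWittVector p n k) A']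
    [Algebra.FormallySmooth (TruncatedWittVector p n k) A']
    [Algebra.FinitePresentation (TruncatedWittVector p n k) A']
    (A : Type v) [CommRing A] (π : A' →+* A)
    (hπsurj : Function.Surjective π)
    (hπker : RingHom.ker π = Ideal.span {(p : A')})
    (f : k →+* A)
    (hf : ∀ c : TruncatedWittVector p n k,
      π (algebraMap (TruncatedWittVector p n k) A' c) = f (c.coeff ⟨0, hn⟩)) :
    ∃ F : TruncatedWittVector p n A →+* A',
      -- (i) `F` is given on arbitrary coefficient lifts by the displayed formula
      (∀ (x : TruncatedWittVector p n A) (y : Fin n → A'),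
          (∀ i, π (y i) = x.coeff i) →
          F x = ∑ i : Fin n, (p : A') ^ (i : ℕ) * y i ^ p ^ (n - (i : ℕ))) ∧
      -- uniqueness of such a map
      (∀ F' : TruncatedWittVector p n A →+* A',
          (∀ (x : TruncatedWittVector p n A) (y : Fin n → A'),
            (∀ i, π (y i) = x.coeff i) →
            F' x = ∑ i : Fin n, (p : A') ^ (i : ℕ) * y i ^ p ^ (n - (i : ℕ))) →
          F' = F) ∧
      -- (ii) `Φⁿ`-semilinearity over `W_n(k)`
      (∀ (c : TruncatedWittVector p n k) (x : TruncatedWittVector p n A),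
          F (twMap p n f c * x) =
            algebraMap (TruncatedWittVector p n k) A'
              (twMap p n (iterateFrobenius k p n) c) * F x) ∧
      -- (iii) injectivity
      Function.Injective F ∧
      -- (iv) the image equals the kernel of the universal derivation
      (∀ z : A', (∃ x, F x = z) ↔
        KaehlerDifferential.D (TruncatedWittVector p n k) A' z = 0) := by
  have : Algebra.Smooth (TruncatedWittVector p n k) A' := { }
  exact tildeFn_exists_general p n hn π hπsurj hπker f hf
end

section
/- Let k be a finite field, d ≥ 1, G := GL_{d+1}(k), and Δ := {0, 1, …, d−1}. For 0 ≤ i ≤ d−1 let V_i ⊆ k^{d+1} be the span of the first i+1 standard basis vectors, and for a subset I ⊆ Δ let P_I ≤ G be the subgroup of all g ∈ G stabilizing V_i for every i ∈ Δ ∖ I (so P_I ⊆ P_J whenever I ⊆ J). For I ⊆ J, let q_{I,J}^* denote the injective pullback map from ℤ-valued functions on G⧸P_J to ℤ-valued functions on G⧸P_I along the natural projection G⧸P_I → G⧸P_J. Define the integral generalized Steinberg module v_{P_I}^G(ℤ) as the quotient of the ℤ-module of functions G⧸P_I → ℤ by the ℤ-submodule generated by the union over all J with I ⊊ J ⊆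 Δ of the images of q_{I,J}^*. Then for every proper subset I ⊊ Δ, the ℤ-module v_{P_I}^G(ℤ) is finitely generated and free. -/
open Matrix

/-- `stdFlag k d i` is the subspace `V_i ⊆ k^{d+1}` spanned by the first `i+1` standard basis
vectors. -/
def stdFlag (k : Type*) [Field k] (d : ℕ) (i : ℕ) : Submodule k (Fin (d + 1) → k) :=
  Submodule.span k {v | ∃ j : Fin (d + 1), (j : ℕ) ≤ i ∧ v = Pi.single j 1}

/-- For a subset `I ⊆ Δ = {0,…,d-1}`, `parab k d I` is the (parabolic) subgroup of
`GL_{d+1}(k)` consisting of all `g` stabilizing `V_i` for every `i ∈ Δ ∖ I`. -/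
def parab (k : Type*) [Field k] (d : ℕ) (I : Set (Fin d)) :
    Subgroup (GL (Fin (d + 1)) k) where
  carrier := {g | ∀ i : Fin d, i ∉ I →
    (stdFlag k d i).map
      (Matrix.mulVecLin (g : Matrix (Fin (d + 1)) (Fin (d + 1)) k)) = stdFlag k d i}
  one_mem' := by
    intro i hi
    rw [Units.val_one, Matrix.mulVecLin_one, Submodule.map_id]
  mul_mem' := by
    intro a b ha hb i hi
    rw [Units.val_mul, Matrix.mulVecLin_mul, Submodule.map_comp, hb i hi, ha i hi]
  inv_mem' := by
    intro a ha i hi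
    conv_lhs => rw [← ha i hi]
    rw [← Submodule.map_comp, ← Matrix.mulVecLin_mul, ← Units.val_mul, inv_mul_cancel,
      Units.val_one, Matrix.mulVecLin_one, Submodule.map_id]

/-- The `ℤ`-module of `P`-invariant functions `G → ℤ`, i.e. of `ℤ`-valued functions on the
coset space `G⧸P`. -/
def invFuns {G : Type*} [Group G] (P : Subgroup G) : Submodule ℤ (G → ℤ) where
  carrier := {f | ∀ g : G, ∀ h ∈ P, f (g * h) = f g}
  add_mem' := by
    intro f₁ f₂ h₁ h₂ g h hh
    simp only [Pi.add_apply, h₁ g h hh, h₂ g h hh]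
  zero_mem' := by intro g h hh; rfl
  smul_mem' := by
    intro c f hf g h hh
    simp only [Pi.smul_apply, hf g h hh]

/-!
A quotient of a finite free module of functions is free as soon as every point `x` satisfies, for
some length function, one of two unitriangularity conditions: either the submodule contains a
function with value `1` at `x` supported on `x` and longer points, or a functional killing the
submodule evaluates at `x` up to the values at shorter points. Points of the first kind can be
eliminated, and points of the second kind index a basis.

Points of `G ⧸ P_I` are partial flags, represented by matrices `g` whose columns have their last
nonzero entries at positions `w 0, …, w d`, with `w` ascending at every `i ∈ I`. If `w` also
ascends at some `j ∉ I`, the indicator function of the fibre of `G ⧸ P_I → G ⧸ P_{I ∪ {j}}` through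
`g` is of the first kind, because `g` has the smallest pivots in its fibre. If `w` descends at every
`i ∉ I`, the alternating sum over the permutations of the columns of `g` within the blocks cut out
by `I` is of the second kind: it kills pullbacks since an adjacent transposition at `j ∉ I` fixes
the image in `G ⧸ P_J` for `j ∈ J`, and all other terms have smaller pivots.
-/

namespace GeneralizedSteinberg

section Triangular

variable {R X α : Type*} [Ring R] [Finite X] [Preorder α] {ℓ : X → α}
  {N : Submodule R (X → R)} {S : Set X}

open LinearMap

lemma codisjoint_iInf_ker_proj_of_triangular
    (h : ∀ x ∉ S, ∃ f ∈ N, f x = 1 ∧ ∀ y ≠ x, f y ≠ 0 → ℓ x < ℓ y) :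
    Codisjoint N (⨅ x ∈ Sᶜ, ker (proj x : (X → R) →ₗ[R] R)) := by
  classical
  have := Fintype.ofFinite X
  rw [codisjoint_iff]
  set T := N ⊔ ⨅ x ∈ Sᶜ, ker (proj x : (X → R) →ₗ[R] R)
  have single_mem (x : X) : Pi.single x 1 ∈ T := by
    have wf : WellFounded fun y x ↦ ℓ x < ℓ y :=
      letI := Preorder.lift ℓ
      wellFounded_gt (α := X)
    induction x using wf.induction with
    | _ x ih =>
      by_cases hx : x ∈ S
      · refine Submodule.mem_sup_right ?_
        simp only [Submodule.mem_iInf, mem_ker, proj_apply]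
        exact fun y hy ↦ Pi.single_eq_of_ne (ne_of_mem_of_not_mem hx hy).symm 1
      · obtain ⟨f, hfN, hfx, hf⟩ := h x hx
        have higher : ∑ y ∈ Finset.univ.erase x, f y • (Pi.single y 1 : X → R) ∈ T := by
          refine Submodule.sum_mem _ fun y hy ↦ ?_
          by_cases hfy : f y = 0
          · simp [hfy]
          · exact T.smul_mem _ (ih y (hf y (Finset.ne_of_mem_erase hy) hfy))
        have hsplit := Finset.add_sum_erase Finset.univ
          (fun y ↦ f y • (Pi.single y 1 : X → R)) (Finset.mem_univ x)
        rw [← pi_eq_sum_univ', hfx, one_smul] at hsplit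
        rw [eq_sub_of_add_eq hsplit]
        exact T.sub_mem (Submodule.mem_sup_left hfN) higher
  refine eq_top_iff.2 fun f _ ↦ ?_
  rw [pi_eq_sum_univ' f]
  exact T.sum_mem fun x _ ↦ T.smul_mem _ (single_mem x)

lemma disjoint_iInf_ker_proj_of_triangular
    (h : ∀ x ∈ S, ∃ φ : (X → R) →ₗ[R] R, N ≤ ker φ ∧
      ∀ f, (∀ y, ℓ y < ℓ x → f y = 0) → φ f = f x) :
    Disjoint N (⨅ x ∈ Sᶜ, ker (proj x : (X → R) →ₗ[R] R)) := by
  rw [Submodule.disjoint_def]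
  intro f hfN hfS
  simp only [Submodule.mem_iInf, mem_ker, proj_apply] at hfS
  have wf : WellFounded fun x y ↦ ℓ x < ℓ y :=
    letI := Preorder.lift ℓ
    wellFounded_lt (α := X)
  ext x
  induction x using wf.induction with
  | _ x ih =>
    by_cases hx : x ∈ S
    · obtain ⟨φ, hφN, hφ⟩ := h x hx
      rw [← hφ f ih]
      exact hφN hfN
    · exact hfS x hx

theorem free_and_finite_quotient_of_triangular (ℓ : X → α)
    (h : ∀ x, (∃ f ∈ N, f x = 1 ∧ ∀ y ≠ x, f y ≠ 0 → ℓ x < ℓ y) ∨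
      ∃ φ : (X → R) →ₗ[R] R, N ≤ ker φ ∧ ∀ f, (∀ y, ℓ y < ℓ x → f y = 0) → φ f = f x) :
    Module.Free R ((X → R) ⧸ N) ∧ Module.Finite R ((X → R) ⧸ N) := by
  classical
  let S : Set X := {x | ¬ ∃ f ∈ N, f x = 1 ∧ ∀ y ≠ x, f y ≠ 0 → ℓ x < ℓ y}
  have compl : IsCompl N (⨅ x ∈ Sᶜ, ker (proj x : (X → R) →ₗ[R] R)) :=
    ⟨disjoint_iInf_ker_proj_of_triangular fun x hx ↦ (h x).resolve_left hx,
      codisjoint_iInf_ker_proj_of_triangular fun _ hx ↦ not_not.1 hx⟩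
  let e : ((X → R) ⧸ N) ≃ₗ[R] (S → R) := (N.quotientEquivOfIsCompl _ compl).trans
    (iInfKerProjEquiv R (fun _ ↦ R) disjoint_compl_right (Set.union_compl_self S).ge)
  exact ⟨.of_equiv e.symm, .equiv e.symm⟩

end Triangular

section CosetFunctions

variable {G : Type*} [Group G]

lemma invFuns_eq_range_funLeft (P : Subgroup G) :
    invFuns P = LinearMap.range (LinearMap.funLeft ℤ ℤ ((↑) : G → G ⧸ P)) := by
  ext f
  constructor
  · intro hf
    have hlift : ∀ a b, QuotientGroup.leftRel P a b → f a = f b := fun a b hab ↦ by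
      rw [← hf a _ (QuotientGroup.leftRel_apply.1 hab), mul_inv_cancel_left]
    exact ⟨Quotient.lift f hlift, rfl⟩
  · rintro ⟨f, rfl⟩ g h hh
    exact congrArg f (QuotientGroup.mk_mul_of_mem g hh)

/-- Functions on `G ⧸ P` as `P`-invariant functions on `G`. -/
noncomputable def funQuotientEquivInvFuns (P : Subgroup G) : (G ⧸ P → ℤ) ≃ₗ[ℤ] invFuns P :=
  (LinearEquiv.ofInjective _ (LinearMap.funLeft_injective_of_surjective ℤ ℤ _
    QuotientGroup.mk_surjective)).trans (LinearEquiv.ofEq _ _ (invFuns_eq_range_funLeft P).symm)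

end CosetFunctions

section OrderedSums

variable {M : Type*} [AddCommMonoid M] [LinearOrder M] [IsOrderedCancelAddMonoid M]

lemma sum_lt_sum_of_card_eq_of_forall_lt {ι : Type*} [DecidableEq ι] {s t : Finset ι} {c : ι → M}
    (hcard : s.card = t.card) (hne : s ≠ t) (h : ∀ a ∈ s \ t, ∀ b ∈ t \ s, c a < c b) :
    ∑ a ∈ s, c a < ∑ b ∈ t, c b := by
  rw [← Finset.sum_sdiff_lt_sum_sdiff]
  have hcard' : (s \ t).card = (t \ s).card := Finset.card_sdiff_comm hcard
  have hs : (s \ t).Nonempty :=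
    Finset.sdiff_nonempty.2 fun hst ↦ hne (Finset.eq_of_subset_of_card_le hst hcard.ge)
  have ht : (t \ s).Nonempty := Finset.card_pos.1 (hcard' ▸ hs.card_pos)
  obtain ⟨b, hb, hmin⟩ := Finset.exists_min_image (t \ s) c ht
  calc ∑ a ∈ s \ t, c a < ∑ _a ∈ s \ t, c b :=
        Finset.sum_lt_sum_of_nonempty hs fun a ha ↦ h a ha b hb
    _ = (t \ s).card • c b := by rw [Finset.sum_const, hcard']
    _ ≤ ∑ b ∈ t \ s, c b := Finset.card_nsmul_le_sum _ _ _ hmin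

variable {d : ℕ} {S : Set (Fin d)}

lemma exists_notMem_of_not_lt {α : Type*} [Preorder α] {c : Fin (d + 1) → α}
    (hc : ∀ i ∈ S, c i.castSucc < c i.succ) {s t : Fin (d + 1)} (hst : s < t)
    (hct : ¬ c s < c t) : ∃ i ∉ S, s ≤ i.castSucc ∧ i.castSucc < t := by
  by_contra! hS
  refine hct (strictMonoOn_of_lt_succ (Set.ordConnected_Icc (a := s) (b := t)) ?_
    ⟨le_rfl, hst.le⟩ ⟨hst.le, le_rfl⟩ hst)
  intro a ha hsa hat
  have hlast : a ≠ Fin.last d := by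
    rintro rfl
    exact ha isMax_top
  obtain ⟨i, rfl⟩ := Fin.exists_castSucc_eq.2 hlast
  rw [Fin.orderSucc_castSucc] at hat ⊢
  refine hc i (by_contra fun hi ↦ ?_)
  exact (hS i hi hsa.1).not_gt (Fin.castSucc_lt_succ.trans_le hat.2)

lemma sum_Iic_lt_sum {c : Fin (d + 1) → M} (hc : ∀ i ∈ S, c i.castSucc < c i.succ) {j : Fin d}
    (hj : j ∈ S) {T : Finset (Fin (d + 1))} (hcard : T.card = (Finset.Iic j.castSucc).card)
    (hne : T ≠ Finset.Iic j.castSucc) (hlow : ∀ i ∉ S, i < j → Finset.Iic i.castSucc ⊆ T)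
    (hhigh : ∀ i ∉ S, j < i → T ⊆ Finset.Iic i.castSucc) :
    ∑ a ∈ Finset.Iic j.castSucc, c a < ∑ a ∈ T, c a := by
  refine sum_lt_sum_of_card_eq_of_forall_lt hcard.symm hne.symm fun s hs t ht ↦ ?_
  simp only [Finset.mem_sdiff, Finset.mem_Iic, not_le] at hs ht
  by_contra hst
  obtain ⟨i, hi, hsi, hit⟩ := exists_notMem_of_not_lt hc (hs.1.trans_lt ht.2) hst
  rcases lt_trichotomy i j with hij | rfl | hij
  · exact hs.2 (hlow i hi hij (Finset.mem_Iic.2 hsi))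
  · exact hi hj
  · exact hit.not_ge (Finset.mem_Iic.1 (hhigh i hi hij ht.1))

end OrderedSums

section Pivots

variable {k ι κ : Type*} [DivisionRing k] [LinearOrder ι] {v x : ι → k} {a b : ι}

/-- `a` is the position of the last nonzero coordinate of `v`. -/
def IsPivot (v : ι → k) (a : ι) : Prop := v a ≠ 0 ∧ ∀ b, a < b → v b = 0

lemma IsPivot.unique (ha : IsPivot v a) (hb : IsPivot v b) : a = b :=
  le_antisymm (not_lt.1 fun h ↦ ha.1 (hb.2 a h)) (not_lt.1 fun h ↦ hb.1 (ha.2 b h))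

lemma IsPivot.lt_of_sub_smul (hv : IsPivot v a) (hx : IsPivot x a)
    (hb : IsPivot (v - (v a / x a) • x) b) : b < a := by
  refine lt_of_not_ge fun hab ↦ hb.1 ?_
  rcases hab.eq_or_lt with rfl | hab
  · simp [hx.1]
  · simp [hv.2 b hab, hx.2 b hab]

lemma exists_isPivot_sum [Fintype κ] {v : κ → ι → k} {p : κ → ι} (hp : p.Injective)
    (hv : ∀ j, IsPivot (v j) (p j)) {c : κ → k} (hc : c ≠ 0) :
    ∃ j, IsPivot (∑ i, c i • v i) (p j) ∧ ∀ i, c i ≠ 0 → p i ≤ p j := by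
  classical
  obtain ⟨j₀, hj₀⟩ := Function.ne_iff.1 hc
  obtain ⟨j, hj, hmax⟩ := Finset.exists_max_image (Finset.univ.filter (c · ≠ 0)) p
    ⟨j₀, by simpa using hj₀⟩
  simp only [Finset.mem_filter, Finset.mem_univ, true_and] at hj hmax
  refine ⟨j, ⟨?_, fun b hb ↦ ?_⟩, hmax⟩
  · rw [Finset.sum_apply, Finset.sum_eq_single j]
    · exact mul_ne_zero hj (hv j).1
    · intro i _ hij
      by_cases hi : c i = 0
      · simp [hi]
      · simp [(hv i).2 _ ((hmax i hi).lt_of_ne (hp.ne hij))]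
    · simp
  · rw [Finset.sum_apply]
    refine Finset.sum_eq_zero fun i _ ↦ ?_
    by_cases hi : c i = 0
    · simp [hi]
    · simp [(hv i).2 _ ((hmax i hi).trans_lt hb)]

lemma linearIndependent_of_isPivot [Finite κ] {v : κ → ι → k} {p : κ → ι} (hp : p.Injective)
    (hv : ∀ j, IsPivot (v j) (p j)) : LinearIndependent k v := by
  have := Fintype.ofFinite κ
  rw [Fintype.linearIndependent_iff]
  intro c hsum
  by_contra! hc
  obtain ⟨j, hj, -⟩ := exists_isPivot_sum hp hv (Function.ne_iff.2 hc)
  exact hj.1 (by rw [hsum, Pi.zero_apply])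

lemma exists_isPivot [Finite ι] (hv : v ≠ 0) : ∃ a, IsPivot v a := by
  classical
  have := Fintype.ofFinite ι
  obtain ⟨i, hi⟩ := Function.ne_iff.1 hv
  obtain ⟨a, ha, hmax⟩ := (Finset.univ.filter (v · ≠ 0)).exists_max_image id
    ⟨i, by simpa using hi⟩
  simp only [Finset.mem_filter, Finset.mem_univ, true_and, id] at ha hmax
  exact ⟨a, ha, fun b hab ↦ by_contra fun hb ↦ (hmax b hb).not_gt hab⟩

variable [Fintype ι] {V W : Submodule k (ι → k)}

open Classical in
/-- The pivot positions of a subspace, which label the Schubert cell containing it. -/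
noncomputable def pivots (V : Submodule k (ι → k)) : Finset ι :=
  {a | ∃ v ∈ V, IsPivot v a}

lemma mem_pivots : a ∈ pivots V ↔ ∃ v ∈ V, IsPivot v a := by
  simp [pivots]

lemma pivots_mono (h : V ≤ W) : pivots V ⊆ pivots W := fun _ ha ↦
  let ⟨v, hv, hva⟩ := mem_pivots.1 ha
  mem_pivots.2 ⟨v, h hv, hva⟩

lemma eq_of_le_of_pivots_subset (h : V ≤ W) (hp : pivots W ⊆ pivots V) : V = W := by
  have mem_of_isPivot (a : ι) : ∀ v ∈ W, IsPivot v a → v ∈ V := by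
    induction a using WellFoundedLT.induction with
    | _ a ih =>
      intro v hv hva
      obtain ⟨x, hx, hxa⟩ := mem_pivots.1 (hp (mem_pivots.2 ⟨v, hv, hva⟩))
      have hcx : (v a / x a) • x ∈ V := V.smul_mem _ hx
      rw [← V.sub_mem_iff_left hcx]
      by_cases h0 : v - (v a / x a) • x = 0
      · rw [h0]
        exact V.zero_mem
      · obtain ⟨b, hb⟩ := exists_isPivot h0
        exact ih b (hva.lt_of_sub_smul hxa hb) _ (W.sub_mem hv (h hcx)) hb
  refine le_antisymm h fun v hv ↦ ?_
  by_cases h0 : v = 0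
  · exact h0 ▸ V.zero_mem
  · obtain ⟨a, ha⟩ := exists_isPivot h0
    exact mem_of_isPivot a v hv ha

lemma card_pivots (V : Submodule k (ι → k)) : (pivots V).card = Module.finrank k V := by
  choose v hvV hv using fun a : pivots V ↦ mem_pivots.1 a.2
  have hspan : Submodule.span k (Set.range v) = V := by
    refine eq_of_le_of_pivots_subset (Submodule.span_le.2 (Set.range_subset_iff.2 hvV)) ?_
    exact fun a ha ↦ mem_pivots.2 ⟨_, Submodule.subset_span ⟨⟨a, ha⟩, rfl⟩, hv _⟩
  have hcard := finrank_span_eq_card (linearIndependent_of_isPivot Subtype.val_injective hv)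
  rw [hspan, Fintype.card_coe] at hcard
  exact hcard.symm

end Pivots

variable {k : Type*} [Field k] {d : ℕ}

section Flags

lemma stdFlag_eq_spanSubset (i : Fin (d + 1)) : stdFlag k d i = Pi.spanSubset k (Set.Iic i) := by
  rw [stdFlag, Pi.spanSubset]
  congr 1
  ext v
  refine exists_congr fun j ↦ and_congr Iff.rfl ?_
  rw [Pi.basisFun_apply, eq_comm]

/-- The member `g V_i` of the flag of `g`, that is, the span of the first `i + 1` columns of `g`. -/
def flag (g : GL (Fin (d + 1)) k) (i : Fin (d + 1)) : Submodule k (Fin (d + 1) → k) :=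
  (stdFlag k d i).map g.val.mulVecLin

variable (g h : GL (Fin (d + 1)) k) {i j : Fin (d + 1)}

lemma flag_eq_span_image_Iic (i : Fin (d + 1)) :
    flag g i = Submodule.span k (g.val.col '' Set.Iic i) := by
  rw [flag, stdFlag_eq_spanSubset, Pi.spanSubset, Submodule.map_span, Set.image_image]
  simp only [mulVecLin_apply, Pi.basisFun_apply, mulVec_single_one]

lemma flag_mul (i : Fin (d + 1)) : flag (g * h) i = (flag h i).map g.val.mulVecLin := by
  rw [flag, flag, Units.val_mul, mulVecLin_mul, Submodule.map_comp]

lemma finrank_flag (i : Fin (d + 1)) : Module.finrank k (flag g i) = i + 1 := by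
  have hcol : LinearIndependent k g.val.col := linearIndependent_cols_iff_isUnit.2 g.isUnit
  have hcard := finrank_span_eq_card
    (hcol.comp ((↑) : Set.Iic i → Fin (d + 1)) Subtype.val_injective)
  rwa [Set.range_comp, Subtype.range_coe, ← flag_eq_span_image_Iic, Fintype.card_Iic,
    Fin.card_Iic] at hcard

variable {g h}

lemma flag_mono (hij : i ≤ j) : flag g i ≤ flag g j := by
  rw [flag_eq_span_image_Iic, flag_eq_span_image_Iic]
  exact Submodule.span_mono (Set.image_mono (Set.Iic_subset_Iic.2 hij))

lemma flag_eq_of_le (hle : flag g i ≤ flag h i) : flag g i = flag h i :=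
  Submodule.eq_of_le_of_finrank_eq hle (by rw [finrank_flag, finrank_flag])

lemma col_mem_flag (hij : j ≤ i) : g.val.col j ∈ flag g i := by
  rw [flag_eq_span_image_Iic]
  exact Submodule.subset_span ⟨j, hij, rfl⟩

lemma mulVec_mem_flag_iff {y : Fin (d + 1) → k} :
    g.val *ᵥ y ∈ flag g i ↔ ∀ t, i < t → y t = 0 := by
  have hmem : g.val *ᵥ y ∈ flag g i ↔ y ∈ stdFlag k d i :=
    (mulVec_injective_of_isUnit g.isUnit).mem_set_image
  simp only [hmem, stdFlag_eq_spanSubset, Pi.mem_spanSubset_iff, Set.mem_Iic, not_le]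

end Flags

section Parabolics

/-- The coset space `G ⧸ P_I`, whose points are the partial flags `(g V_i)_{i ∉ I}`. -/
abbrev PartialFlags (k : Type*) [Field k] {d : ℕ} (I : Set (Fin d)) : Type _ :=
  GL (Fin (d + 1)) k ⧸ parab k d I

variable {g h : GL (Fin (d + 1)) k} {I J : Set (Fin d)}

lemma mem_parab_iff : g ∈ parab k d I ↔ ∀ i ∉ I, flag g i.castSucc = flag 1 i.castSucc := by
  have hone (i : Fin (d + 1)) : flag 1 i = stdFlag k d i := by
    rw [flag, Units.val_one, mulVecLin_one, Submodule.map_id]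
  simp only [hone]
  rfl

lemma mk_eq_mk_iff : (g : PartialFlags k I) = h ↔
    ∀ i ∉ I, flag g i.castSucc = flag h i.castSucc := by
  rw [QuotientGroup.eq, mem_parab_iff]
  refine forall₂_congr fun i _ ↦ ?_
  have hinj := Submodule.map_injective_of_injective
    (f := g.val.mulVecLin) (mulVec_injective_of_isUnit g.isUnit)
  rw [← hinj.eq_iff, ← flag_mul, ← flag_mul, mul_inv_cancel_left, mul_one, eq_comm]

lemma parab_mono (hIJ : I ⊆ J) : parab k d I ≤ parab k d J :=
  fun _ hg i hi ↦ hg i (Set.notMem_subset hIJ hi)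

end Parabolics

section PermutationMatrices

variable {n R : Type*} [Fintype n] [DecidableEq n] [CommRing R]

/-- The permutation matrix of `τ`, sending the basis vector `e_j` to `e_{τ j}`. -/
def permGL : Equiv.Perm n →* GL n R := permMatrixHom.toHomUnits

lemma col_mul_permGL (g : GL n R) (τ : Equiv.Perm n) (j : n) :
    (g * permGL τ).val.col j = g.val.col (τ j) := by
  have hτ : (permGL τ : GL n R).val = τ⁻¹.toPEquiv.toMatrix := rfl
  rw [Units.val_mul, hτ, PEquiv.mul_toMatrix_toPEquiv]
  rfl

lemma flag_mul_permGL (g : GL (Fin (d + 1)) k) {τ : Equiv.Perm (Fin (d + 1))} {i : Fin (d + 1)}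
    (hτ : ∀ x ≤ i, τ x ≤ i) : flag (g * permGL τ) i = flag g i := by
  refine flag_eq_of_le ?_
  rw [flag_eq_span_image_Iic (g * permGL τ), Submodule.span_le]
  rintro _ ⟨j, hj, rfl⟩
  rw [col_mul_permGL]
  exact col_mem_flag (hτ j hj)

lemma swap_castSucc_succ_le {i j : Fin d} (hij : i ≠ j) {x : Fin (d + 1)} (hx : x ≤ i.castSucc) :
    Equiv.swap j.castSucc j.succ x ≤ i.castSucc := by
  rcases eq_or_ne x j.castSucc with rfl | hxj
  · rw [Equiv.swap_apply_left]
    exact Fin.succ_le_castSucc_iff.2 (lt_of_le_of_ne (Fin.castSucc_le_castSucc_iff.1 hx) hij.symm)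
  rcases eq_or_ne x j.succ with rfl | hxj'
  · rw [Equiv.swap_apply_right]
    exact Fin.castSucc_lt_succ.le.trans hx
  · rwa [Equiv.swap_apply_of_ne_of_ne hxj hxj']

lemma permGL_swap_mem_parab {J : Set (Fin d)} {j : Fin d} (hj : j ∈ J) :
    permGL (Equiv.swap j.castSucc j.succ) ∈ parab k d J := by
  refine mem_parab_iff.2 fun i hi ↦ ?_
  rw [← one_mul (permGL _)]
  exact flag_mul_permGL 1 fun _ ↦ swap_castSucc_succ_le (ne_of_mem_of_not_mem hj hi).symm

end PermutationMatrices

section BruhatRepresentatives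

variable {g : GL (Fin (d + 1)) k} {w : Equiv.Perm (Fin (d + 1))} {I : Set (Fin d)}

/-- The columns of `g` have their pivots at the positions prescribed by `w`: equivalently,
`g = u w` with `u` upper triangular, so that `g` is a representative adapted to its Bruhat cell. -/
def HasPivotCols (g : GL (Fin (d + 1)) k) (w : Equiv.Perm (Fin (d + 1))) : Prop :=
  ∀ j, IsPivot (g.val.col j) (w j)

lemma HasPivotCols.mul_permGL (hg : HasPivotCols g w) (τ : Equiv.Perm (Fin (d + 1))) :
    HasPivotCols (g * permGL τ) (w * τ) := fun j ↦ by
  rw [col_mul_permGL]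
  exact hg (τ j)

lemma HasPivotCols.pivots_flag (hg : HasPivotCols g w) (i : Fin (d + 1)) :
    pivots (flag g i) = (Finset.Iic i).map w.toEmbedding := by
  refine (Finset.eq_of_subset_of_card_le (fun a ha ↦ ?_) ?_).symm
  · obtain ⟨j, hj, rfl⟩ := Finset.mem_map.1 ha
    exact mem_pivots.2 ⟨_, col_mem_flag (Finset.mem_Iic.1 hj), hg j⟩
  · rw [card_pivots, finrank_flag, Finset.card_map, Fin.card_Iic]

lemma exists_injective_mem_pivots_flag (g : GL (Fin (d + 1)) k) :
    ∃ p : Fin (d + 1) → Fin (d + 1), p.Injective ∧ ∀ j, p j ∈ pivots (flag g j) := by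
  refine (Finset.all_card_le_biUnion_card_iff_exists_injective _).1 fun s ↦ ?_
  rcases s.eq_empty_or_nonempty with rfl | hs
  · simp
  calc s.card ≤ (Finset.Iic (s.max' hs)).card :=
        Finset.card_le_card fun j hj ↦ Finset.mem_Iic.2 (s.le_max' j hj)
    _ = (pivots (flag g (s.max' hs))).card := by rw [card_pivots, finrank_flag, Fin.card_Iic]
    _ ≤ _ := Finset.card_le_card (Finset.subset_biUnion_of_mem (fun j ↦ pivots (flag g j))
        (s.max'_mem hs))

lemma exists_hasPivotCols (g : GL (Fin (d + 1)) k) :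
    ∃ g' w, HasPivotCols g' w ∧ ∀ i, flag g' i = flag g i := by
  obtain ⟨p, hp, hpg⟩ := exists_injective_mem_pivots_flag g
  choose v hvg hv using fun j ↦ mem_pivots.1 (hpg j)
  have hunit : IsUnit (of v)ᵀ := linearIndependent_cols_iff_isUnit.1
    (linearIndependent_of_isPivot hp hv)
  refine ⟨hunit.unit, .ofBijective p (Finite.injective_iff_bijective.1 hp), hv,
    fun i ↦ flag_eq_of_le ?_⟩
  rw [flag_eq_span_image_Iic hunit.unit, Submodule.span_le]
  rintro _ ⟨j, hj, rfl⟩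
  exact flag_mono hj (hvg j)

lemma exists_sorted_hasPivotCols (x : PartialFlags k I) :
    ∃ (g : GL (Fin (d + 1)) k) (w : Equiv.Perm (Fin (d + 1))),
      (g : PartialFlags k I) = x ∧ HasPivotCols g w ∧ ∀ i ∈ I, w i.castSucc < w i.succ := by
  let W : Set (Equiv.Perm (Fin (d + 1))) :=
    {w | ∃ g : GL (Fin (d + 1)) k, (g : PartialFlags k I) = x ∧ HasPivotCols g w}
  have hW : W.Nonempty := by
    obtain ⟨g, rfl⟩ := QuotientGroup.mk_surjective x
    obtain ⟨g', w, hg', hflag⟩ := exists_hasPivotCols g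
    exact ⟨w, g', mk_eq_mk_iff.2 fun i _ ↦ hflag _, hg'⟩
  obtain ⟨w, ⟨g, rfl, hg⟩, hmin⟩ := Set.exists_min_image W (fun w ↦ toLex ⇑w) W.toFinite hW
  refine ⟨g, w, rfl, hg, fun i hi ↦ lt_of_not_ge fun hle ↦ ?_⟩
  have hlt : w i.succ < w i.castSucc := hle.lt_of_ne (w.injective.ne Fin.castSucc_lt_succ.ne')
  exact (Pi.lex_desc Fin.castSucc_lt_succ.le hlt).not_ge
    (hmin _ ⟨_, QuotientGroup.mk_mul_of_mem g (permGL_swap_mem_parab hi), hg.mul_permGL _⟩)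

end BruhatRepresentatives

section PivotSum

open Finset

variable {g h : GL (Fin (d + 1)) k} {w : Equiv.Perm (Fin (d + 1))} {I S : Set (Fin d)} {j : Fin d}

open Classical in
/-- The sum of all pivot positions of all subspaces in a partial flag. It plays the part of the
dimension of the Schubert cell containing the flag. -/
noncomputable def pivotSum (I : Set (Fin d)) : PartialFlags k I → ℕ :=
  Quotient.lift (fun g ↦ ∑ i with i ∉ I, ∑ a ∈ pivots (flag g i.castSucc), (a : ℕ))
    fun _ _ hgh ↦ sum_congr rfl fun i hi ↦ by
      rw [mk_eq_mk_iff.1 (Quotient.sound hgh) i (mem_filter.1 hi).2]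

open Classical in
lemma pivotSum_mk (I : Set (Fin d)) (g : GL (Fin (d + 1)) k) :
    pivotSum I (g : PartialFlags k I) =
      ∑ i with i ∉ I, ∑ a ∈ pivots (flag g i.castSucc), (a : ℕ) := rfl

lemma HasPivotCols.sum_pivots_flag (hg : HasPivotCols g w) (i : Fin (d + 1)) :
    ∑ a ∈ pivots (flag g i), (a : ℕ) = ∑ a ∈ Iic i, (w a : ℕ) := by
  rw [hg.pivots_flag, sum_map]
  rfl

lemma HasPivotCols.le_of_isPivot_mulVec (hg : HasPivotCols g w) {y : Fin (d + 1) → k}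
    {a t : Fin (d + 1)} (ha : IsPivot (g.val *ᵥ y) a) (ht : y t ≠ 0) : w t ≤ a := by
  obtain ⟨s, hs, hmax⟩ := exists_isPivot_sum w.injective hg (Function.ne_iff.2 ⟨t, ht⟩)
  have hsum : g.val *ᵥ y = ∑ i, y i • g.val.col i := by
    rw [mulVec_eq_sum]
    simp only [op_smul_eq_smul]
    rfl
  rw [← hsum] at hs
  exact ha.unique hs ▸ hmax t ht

lemma HasPivotCols.flag_eq_of_pivots_eq (hg : HasPivotCols g w)
    (hw : ∀ i ∈ S, w i.castSucc < w i.succ)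
    (hS : ∀ i ∉ S, flag h i.castSucc = flag g i.castSucc)
    (hpiv : pivots (flag h j.castSucc) = pivots (flag g j.castSucc)) :
    flag h j.castSucc = flag g j.castSucc := by
  have hinf : flag h j.castSucc ⊓ flag g j.castSucc = flag h j.castSucc := by
    refine eq_of_le_of_pivots_subset inf_le_left fun a ha ↦ mem_pivots.2 ?_
    obtain ⟨x, hx, hxa⟩ := mem_pivots.1 ha
    rw [hpiv, hg.pivots_flag] at ha
    obtain ⟨s, hs, rfl⟩ := Finset.mem_map.1 ha
    rw [Finset.mem_Iic] at hs
    by_cases hsj : ∃ i ∉ S, s ≤ i.castSucc ∧ i ≤ j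
    · obtain ⟨i, hi, hsi, hij⟩ := hsj
      have hcol : g.val.col s ∈ flag h i.castSucc := hS i hi ▸ col_mem_flag hsi
      exact ⟨_, ⟨flag_mono (Fin.castSucc_le_castSucc_iff.2 hij) hcol, col_mem_flag hs⟩, hg s⟩
    · refine ⟨x, ⟨hx, ?_⟩, hxa⟩
      obtain ⟨y, rfl⟩ := mulVec_surjective_iff_isUnit.2 g.isUnit x
      refine mulVec_mem_flag_iff.2 fun t hjt ↦ by_contra fun ht ↦ ?_
      have hts : ¬ w s < w t := (hg.le_of_isPivot_mulVec hxa ht).not_gt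
      obtain ⟨i, hi, hsi, hit⟩ := exists_notMem_of_not_lt hw (hs.trans_lt hjt) hts
      have hji : j ≤ i := le_of_not_ge fun hij ↦ hsj ⟨i, hi, hsi, hij⟩
      have hxi := flag_mono (Fin.castSucc_le_castSucc_iff.2 hji) hx
      rw [hS i hi] at hxi
      exact ht (mulVec_mem_flag_iff.1 hxi t hit)
  exact flag_eq_of_le (inf_eq_left.1 hinf)

lemma HasPivotCols.sum_pivots_flag_lt (hg : HasPivotCols g w)
    (hw : ∀ i ∈ S, w i.castSucc < w i.succ) (hj : j ∈ S)
    (hS : ∀ i ∉ S, flag h i.castSucc = flag g i.castSucc)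
    (hne : flag h j.castSucc ≠ flag g j.castSucc) :
    ∑ a ∈ pivots (flag g j.castSucc), (a : ℕ) < ∑ a ∈ pivots (flag h j.castSucc), (a : ℕ) := by
  set T := (pivots (flag h j.castSucc)).map w.symm.toEmbedding with hT
  have hpiv : pivots (flag h j.castSucc) = T.map w.toEmbedding := by
    rw [hT, Finset.map_map, ← Equiv.trans_toEmbedding, Equiv.symm_trans_self,
      Equiv.refl_toEmbedding, map_refl]
  have hlow (i : Fin d) (hi : i ∉ S) (hij : i < j) : Iic i.castSucc ⊆ T := by
    rw [← map_subset_map (f := w.toEmbedding), ← hpiv, ← hg.pivots_flag, ← hS i hi]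
    exact pivots_mono (flag_mono (Fin.castSucc_le_castSucc_iff.2 hij.le))
  have hhigh (i : Fin d) (hi : i ∉ S) (hji : j < i) : T ⊆ Iic i.castSucc := by
    rw [← map_subset_map (f := w.toEmbedding), ← hpiv, ← hg.pivots_flag, ← hS i hi]
    exact pivots_mono (flag_mono (Fin.castSucc_le_castSucc_iff.2 hji.le))
  have hcard : T.card = (Iic j.castSucc).card := by
    rw [hT, card_map, card_pivots, finrank_flag, Fin.card_Iic]
  have hT_ne : T ≠ Iic j.castSucc := fun hTj ↦ hne <|
    hg.flag_eq_of_pivots_eq hw hS (by rw [hpiv, hTj, hg.pivots_flag])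
  rw [hg.sum_pivots_flag, hpiv, sum_map]
  exact sum_Iic_lt_sum (c := fun a ↦ (w a : ℕ)) hw hj hcard hT_ne hlow hhigh

lemma HasPivotCols.pivotSum_lt (hg : HasPivotCols g w)
    (hw : ∀ i ∈ insert j I, w i.castSucc < w i.succ)
    (hJ : (h : PartialFlags k (insert j I)) = g) (hI : (h : PartialFlags k I) ≠ g) :
    pivotSum I (g : PartialFlags k I) < pivotSum I (h : PartialFlags k I) := by
  classical
  have hflag := mk_eq_mk_iff.1 hJ
  obtain ⟨i, hi, hne⟩ : ∃ i ∉ I, flag h i.castSucc ≠ flag g i.castSucc := by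
    by_contra! hall
    exact hI (mk_eq_mk_iff.2 hall)
  have lt_of_ne (i : Fin d) (hne : flag h i.castSucc ≠ flag g i.castSucc) :
      ∑ a ∈ pivots (flag g i.castSucc), (a : ℕ) < ∑ a ∈ pivots (flag h i.castSucc), (a : ℕ) :=
    hg.sum_pivots_flag_lt hw (not_not.1 fun hi ↦ hne (hflag i hi)) hflag hne
  rw [pivotSum_mk, pivotSum_mk]
  refine sum_lt_sum (fun i _ ↦ ?_) ⟨i, mem_filter.2 ⟨mem_univ i, hi⟩, lt_of_ne i hne⟩
  rcases eq_or_ne (flag h i.castSucc) (flag g i.castSucc) with heq | hne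
  · rw [heq]
  · exact (lt_of_ne i hne).le

end PivotSum

section BlockPermutations

open Finset

variable {g : GL (Fin (d + 1)) k} {w τ : Equiv.Perm (Fin (d + 1))} {I : Set (Fin d)}

/-- The permutations preserving the first `i + 1` indices for every `i ∈ I`, the Young subgroup
generated by the adjacent transpositions at the positions outside `I`. -/
def blockPerms (I : Set (Fin d)) : Subgroup (Equiv.Perm (Fin (d + 1))) where
  carrier := {τ | ∀ i ∈ I, ∀ x, τ x ≤ i.castSucc ↔ x ≤ i.castSucc}
  one_mem' _ _ _ := Iff.rfl
  mul_mem' hσ hτ i hi x := (hσ i hi _).trans (hτ i hi x)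
  inv_mem' {τ} hτ i hi x := by
    rw [← hτ i hi, ← Equiv.Perm.mul_apply, mul_inv_cancel, Equiv.Perm.one_apply]

lemma swap_mem_blockPerms {j : Fin d} (hj : j ∉ I) :
    Equiv.swap j.castSucc j.succ ∈ blockPerms I := by
  intro i hi x
  have hij : i ≠ j := ne_of_mem_of_not_mem hi hj
  refine ⟨fun hx ↦ ?_, swap_castSucc_succ_le hij⟩
  rw [← Equiv.swap_apply_self j.castSucc j.succ x]
  exact swap_castSucc_succ_le hij hx

lemma exists_map_Iic_ne (hτ : τ ∈ blockPerms I) (hne : τ ≠ 1) :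
    ∃ i ∉ I, (Iic i.castSucc).map τ.toEmbedding ≠ Iic i.castSucc := by
  by_contra! hmap
  refine hne (Equiv.ext fun x ↦ eq_of_forall_ge_iff fun y ↦ ?_)
  rcases Fin.eq_castSucc_or_eq_last y with ⟨i, rfl⟩ | rfl
  · by_cases hi : i ∈ I
    · exact hτ i hi x
    · rw [← mem_Iic, ← hmap i hi, mem_map_equiv, Equiv.symm_apply_apply, mem_Iic,
        Equiv.Perm.one_apply]
  · exact iff_of_true (Fin.le_last _) (Fin.le_last _)

lemma sum_Iic_apply_lt (hw : ∀ i ∉ I, w i.succ < w i.castSucc) (hτ : τ ∈ blockPerms I) {j : Fin d}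
    (hj : j ∉ I) (hne : (Iic j.castSucc).map τ.toEmbedding ≠ Iic j.castSucc) :
    ∑ a ∈ Iic j.castSucc, (w (τ a) : ℕ) < ∑ a ∈ Iic j.castSucc, (w a : ℕ) := by
  have hsum : ∑ a ∈ Iic j.castSucc, (w (τ a) : ℕ) =
      ∑ a ∈ (Iic j.castSucc).map τ.toEmbedding, (w a : ℕ) := by
    rw [sum_map]
    rfl
  rw [hsum]
  refine sum_Iic_lt_sum (M := ℕᵒᵈ) (S := Iᶜ) (c := fun a ↦ OrderDual.toDual (w a : ℕ)) hw hj
    (card_map _) hne (fun i hi hij x hx ↦ ?_) (fun i hi hji x hx ↦ ?_)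
  · rw [Set.notMem_compl_iff] at hi
    rw [mem_map_equiv, mem_Iic]
    refine (((blockPerms I).inv_mem hτ i hi x).2 (mem_Iic.1 hx)).trans ?_
    exact Fin.castSucc_le_castSucc_iff.2 hij.le
  · rw [Set.notMem_compl_iff] at hi
    obtain ⟨y, hy, rfl⟩ := Finset.mem_map.1 hx
    refine mem_Iic.2 ((hτ i hi y).2 ((mem_Iic.1 hy).trans ?_))
    exact Fin.castSucc_le_castSucc_iff.2 hji.le

lemma HasPivotCols.pivotSum_mul_permGL_lt (hg : HasPivotCols g w)
    (hw : ∀ i ∉ I, w i.succ < w i.castSucc) (hτ : τ ∈ blockPerms I) (hne : τ ≠ 1) :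
    pivotSum I (QuotientGroup.mk (g * permGL τ) : PartialFlags k I) <
      pivotSum I (g : PartialFlags k I) := by
  classical
  obtain ⟨i, hi, hmap⟩ := exists_map_Iic_ne hτ hne
  simp only [pivotSum_mk, (hg.mul_permGL τ).sum_pivots_flag, hg.sum_pivots_flag]
  refine sum_lt_sum (fun j hj ↦ ?_)
    ⟨i, mem_filter.2 ⟨mem_univ i, hi⟩, sum_Iic_apply_lt hw hτ hi hmap⟩
  by_cases hmap : (Iic j.castSucc).map τ.toEmbedding = Iic j.castSucc
  · conv_rhs => rw [← hmap, sum_map]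
    rfl
  · exact (sum_Iic_apply_lt hw hτ (mem_filter.1 hj).2 hmap).le

end BlockPermutations

section AlternatingSum

variable {g : GL (Fin (d + 1)) k} {w : Equiv.Perm (Fin (d + 1))} {I : Set (Fin d)}

/-- The submodule generated by the `P_J`-invariant functions for `I ⊊ J`. -/
def degenerateFuns (k : Type*) [Field k] {d : ℕ} (I : Set (Fin d)) :
    Submodule ℤ (GL (Fin (d + 1)) k → ℤ) :=
  Submodule.span ℤ (⋃ J ∈ {J : Set (Fin d) | I ⊂ J}, (invFuns (parab k d J) :
    Set (GL (Fin (d + 1)) k → ℤ)))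

open Classical in
/-- The alternating sum of the values of a function over the translates of `g` by the
permutation matrices of `blockPerms I`, as in the Solomon-Tits description of the Steinberg
module. -/
noncomputable def altSum (g : GL (Fin (d + 1)) k) (I : Set (Fin d)) :
    (GL (Fin (d + 1)) k → ℤ) →ₗ[ℤ] ℤ :=
  ∑ τ : blockPerms I, (Equiv.Perm.sign τ.val : ℤ) • LinearMap.proj (g * permGL τ.val)

open Classical in
lemma altSum_apply (f : GL (Fin (d + 1)) k → ℤ) :
    altSum g I f = ∑ τ : blockPerms I, Equiv.Perm.sign τ.val * f (g * permGL τ.val) := by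
  simp only [altSum, LinearMap.sum_apply, LinearMap.smul_apply, LinearMap.proj_apply, smul_eq_mul]

lemma degenerateFuns_le_ker_altSum (g : GL (Fin (d + 1)) k) (I : Set (Fin d)) :
    degenerateFuns k I ≤ LinearMap.ker (altSum g I) := by
  classical
  refine Submodule.span_le.2 (Set.iUnion₂_subset fun J hIJ f hf ↦ ?_)
  obtain ⟨j, hjJ, hjI⟩ := Set.exists_of_ssubset hIJ
  let s : blockPerms I := ⟨Equiv.swap j.castSucc j.succ, swap_mem_blockPerms hjI⟩
  have cancel (τ : blockPerms I) :
      (Equiv.Perm.sign (τ * s).val : ℤ) * f (g * permGL (τ * s).val) =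
        -(Equiv.Perm.sign τ.val * f (g * permGL τ.val)) := by
    have hsign : Equiv.Perm.sign s.val = -1 := Equiv.Perm.sign_swap Fin.castSucc_lt_succ.ne
    have hf_eq : f (g * permGL τ.val * permGL s.val) = f (g * permGL τ.val) :=
      hf _ _ (permGL_swap_mem_parab hjJ)
    rw [Subgroup.coe_mul, map_mul, map_mul, hsign, ← mul_assoc, hf_eq, mul_neg_one,
      Units.val_neg, neg_mul]
  have hneg : altSum g I f = -altSum g I f := by
    conv_lhs => rw [altSum_apply, ← Equiv.sum_comp (Equiv.mulRight s)]
    rw [altSum_apply, ← Finset.sum_neg_distrib]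
    exact Finset.sum_congr rfl fun τ _ ↦ cancel τ
  exact self_eq_neg.1 hneg

lemma HasPivotCols.altSum_eq_apply (hg : HasPivotCols g w)
    (hw : ∀ i ∉ I, w i.succ < w i.castSucc) {f : PartialFlags k I → ℤ}
    (hf : ∀ y, pivotSum I y < pivotSum I (g : PartialFlags k I) → f y = 0) :
    altSum g I (fun x ↦ f x) = f g := by
  classical
  rw [altSum_apply, Fintype.sum_eq_single 1 fun τ hτ ↦ ?_]
  · simp
  · rw [hf _ (hg.pivotSum_mul_permGL_lt hw τ.2 (by simpa using hτ)), mul_zero]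

end AlternatingSum

section Steinberg

variable {g : GL (Fin (d + 1)) k} {w : Equiv.Perm (Fin (d + 1))} {I : Set (Fin d)}

/-- `degenerateFuns k I` viewed inside the functions on `G ⧸ P_I`, where it is generated by the
pullbacks from `G ⧸ P_J` for `I ⊊ J`. -/
def pullbacks (k : Type*) [Field k] {d : ℕ} (I : Set (Fin d)) :
    Submodule ℤ (PartialFlags k I → ℤ) :=
  (degenerateFuns k I).comap (LinearMap.funLeft ℤ ℤ QuotientGroup.mk)

lemma HasPivotCols.exists_mem_pullbacks (hg : HasPivotCols g w) {j : Fin d} (hj : j ∉ I)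
    (hw : ∀ i ∈ insert j I, w i.castSucc < w i.succ) :
    ∃ f ∈ pullbacks k I, f g = 1 ∧
      ∀ y ≠ (g : PartialFlags k I), f y ≠ 0 → pivotSum I (g : PartialFlags k I) < pivotSum I y := by
  classical
  let indicator : PartialFlags k (insert j I) → ℤ := Pi.single g 1
  refine ⟨indicator ∘ Subgroup.quotientMapOfLE (parab_mono (Set.subset_insert j I)), ?_,
    Pi.single_eq_same _ _, ?_⟩
  · refine Submodule.subset_span (Set.mem_biUnion (Set.ssubset_insert hj) ?_)
    rw [SetLike.mem_coe, invFuns_eq_range_funLeft]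
    exact ⟨indicator, rfl⟩
  · rintro ⟨h⟩ hne hh
    exact hg.pivotSum_lt hw (of_not_not fun hJ ↦ hh (Pi.single_eq_of_ne hJ 1)) hne

theorem free_and_finite_quotient_pullbacks [Finite k] (I : Set (Fin d)) :
    Module.Free ℤ ((PartialFlags k I → ℤ) ⧸ pullbacks k I) ∧
      Module.Finite ℤ ((PartialFlags k I → ℤ) ⧸ pullbacks k I) := by
  refine free_and_finite_quotient_of_triangular (pivotSum I) fun x ↦ ?_
  obtain ⟨g, w, rfl, hg, hwI⟩ := exists_sorted_hasPivotCols x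
  by_cases hasc : ∃ j ∉ I, w j.castSucc < w j.succ
  · obtain ⟨j, hj, hwj⟩ := hasc
    exact .inl (hg.exists_mem_pullbacks hj (Set.forall_mem_insert.2 ⟨hwj, hwI⟩))
  · have hdesc : ∀ i ∉ I, w i.succ < w i.castSucc := fun i hi ↦
      (not_lt.1 fun hwi ↦ hasc ⟨i, hi, hwi⟩).lt_of_ne (w.injective.ne Fin.castSucc_lt_succ.ne')
    exact .inr ⟨altSum g I ∘ₗ LinearMap.funLeft ℤ ℤ QuotientGroup.mk,
      fun _ hf ↦ degenerateFuns_le_ker_altSum g I hf, fun _ ↦ hg.altSum_eq_apply hdesc⟩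

lemma map_funQuotientEquivInvFuns_pullbacks (I : Set (Fin d)) :
    (pullbacks k I).map (funQuotientEquivInvFuns (parab k d I)).toLinearMap =
      (degenerateFuns k I).comap (invFuns (parab k d I)).subtype :=
  Submodule.map_comap_eq_of_surjective (funQuotientEquivInvFuns (parab k d I)).surjective
    ((degenerateFuns k I).comap (invFuns (parab k d I)).subtype)

end Steinberg

end GeneralizedSteinberg

/-- Let `k` be a finite field, `d ≥ 1`, `G = GL_{d+1}(k)` and, for a proper
subset `I ⊊ Δ = {0,…,d−1}`, let `v_{P_I}^G(ℤ)` be the integral generalized Steinberg module: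
the quotient of the module of `ℤ`-valued functions on `G⧸P_I` (realized as `P_I`-invariant
functions on `G`) by the submodule generated by the functions pulled back from `G⧸P_J` for
all `J` with `I ⊊ J ⊆ Δ` (realized as the `P_J`-invariant functions, for `P_I ≤ P_J`).
Then `v_{P_I}^G(ℤ)` is a finitely generated free `ℤ`-module. -/
theorem steinberg_free_and_finite (k : Type*) [Field k] [Fintype k]
    (d : ℕ) (hd : 1 ≤ d) (I : Set (Fin d)) (hI : I ≠ Set.univ) :
    Module.Free ℤ
      ((invFuns (parab k d I)) ⧸
        (Submodule.comap (invFuns (parab k d I)).subtype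
          (Submodule.span ℤ (⋃ J ∈ {J : Set (Fin d) | I ⊂ J},
            ((invFuns (parab k d J) : Submodule ℤ (GL (Fin (d + 1)) k → ℤ)) :
              Set (GL (Fin (d + 1)) k → ℤ)))))) ∧
    Module.Finite ℤ
      ((invFuns (parab k d I)) ⧸
        (Submodule.comap (invFuns (parab k d I)).subtype
          (Submodule.span ℤ (⋃ J ∈ {J : Set (Fin d) | I ⊂ J},
            ((invFuns (parab k d J) : Submodule ℤ (GL (Fin (d + 1)) k → ℤ)) :
              Set (GL (Fin (d + 1)) k → ℤ)))))) := by
  obtain ⟨_, _⟩ := GeneralizedSteinberg.free_and_finite_quotient_pullbacks (k := k) I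
  let e := Submodule.Quotient.equiv _ _ (GeneralizedSteinberg.funQuotientEquivInvFuns _)
    (GeneralizedSteinberg.map_funQuotientEquivInvFuns_pullbacks (k := k) I)
  exact ⟨.of_equiv e, .equiv e⟩
end

section
/- Let k be a perfect field of characteristic p > 0 and A a smooth k-algebra, with universal derivation d : A → Ω¹_{A/k} into the module of Kähler differentials. Let n ≥ 2 and a₁,…,a_{n−1} ∈ A. Then there exists b ∈ A with Σ_{i=1}^{n−1} a_i^{p^{n−i}−1}·d a_i = d b if and only if d a_i = 0 for every 1 ≤ i ≤ n−1. -/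
universe u

/-!
If `ω = ∑ fᵢ ^ p gᵢ ^ (p - 1) dgᵢ` is exact, then `∑ fᵢ dgᵢ = 0`: this is the injectivity of the
inverse Cartier operator. To see it, let `D` be the derivation attached to a linear form on `Ω`.
Since `D ^ p` is again a derivation, contracting `ω = db` with `D ^ p` gives
`∑ fᵢ ^ p gᵢ ^ (p - 1) D ^ p gᵢ = D ^ p b`, while contracting with `D` and applying `D ^ (p - 1)`
gives, by Hochschild's formula `D ^ (p - 1) (g ^ (p - 1) D g) = g ^ (p - 1) D ^ p g - (D g) ^ p`,
the same identity with the extra term `∑ (fᵢ D gᵢ) ^ p = (∑ fᵢ D gᵢ) ^ p`, which must vanish.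

As `p ^ (s + 1) - 1 = (p ^ s - 1) p + (p - 1)`, this turns the exactness of
`∑ aᵢ ^ (p ^ (n - i) - 1) daᵢ` into `∑ aᵢ ^ (p ^ (n - 1 - i) - 1) daᵢ = 0`, whose last term is
`da_{n-1}`, so that the sum of the others is exact and induction applies.
-/

open Polynomial

section Derivation

variable {k A : Type*} [CommRing k] [CommRing A] [Algebra k A] (D : Derivation k A A)

theorem derivation_iterate_sum {ι : Type*} (s : Finset ι) (n : ℕ) (x : ι → A) :
    D^[n] (∑ i ∈ s, x i) = ∑ i ∈ s, D^[n] (x i) := by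
  simpa only [Module.End.pow_apply, Derivation.coeFn_coe] using
    map_sum ((D : Module.End k A) ^ n) x s

theorem derivation_iterate_const_mul {c : A} (hc : D c = 0) (n : ℕ) (x : A) :
    D^[n] (c * x) = c * D^[n] x := by
  have hcomm : Function.Commute D (c * ·) := fun x => by simp [hc]
  exact hcomm.iterate_left n x

theorem derivation_iterate_mul (n : ℕ) (a b : A) :
    D^[n] (a * b) = ∑ ij ∈ Finset.HasAntidiagonal.antidiagonal n,
      (n.choose ij.1 : A) * (D^[ij.1] a * D^[ij.2] b) := by
  induction n with
  | zero => simp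
  | succ n ih =>
    rw [Finset.sum_antidiagonal_choose_succ_mul (fun i j => D^[i] a * D^[j] b) n,
      Function.iterate_succ_apply', ih, map_sum, ← Finset.sum_add_distrib]
    refine Finset.sum_congr rfl fun ij hij => ?_
    rw [Nat.choose_symm_of_eq_add (Finset.HasAntidiagonal.mem_antidiagonal.1 hij).symm]
    simp only [Function.iterate_succ_apply', Derivation.leibniz, smul_eq_mul,
      Derivation.map_natCast]
    ring

theorem dvd_derivation_iterate_pow_mul_sub (n : ℕ) (y x : A) :
    y ∣ D^[n] (y ^ n * x) - n.factorial * D y ^ n * x := by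
  induction n generalizing x with
  | zero => simp
  | succ n ih =>
    have hD : D (y ^ (n + 1) * x) = y ^ n * ((n + 1) * D y * x + y * D x) := by
      rw [Derivation.leibniz, Derivation.leibniz_pow]
      simp only [smul_eq_mul, nsmul_eq_mul, Nat.cast_add, Nat.cast_one, Nat.add_sub_cancel]
      ring
    rw [Function.iterate_succ_apply, hD]
    obtain ⟨c, hc⟩ := ih ((n + 1) * D y * x + y * D x)
    refine ⟨c + n.factorial * D y ^ n * D x, ?_⟩
    rw [Nat.factorial_succ, Nat.cast_mul, Nat.cast_add, Nat.cast_one]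
    linear_combination hc

/-- The extension of a derivation `D` of `A` to the derivation of `A[X]` that applies `D` to each
coefficient. It is `Derivation.mapCoeffs`, with values in `A[X]` instead of
`PolynomialModule A A`. -/
noncomputable def polynomialDerivation : Derivation k A[X] A[X] :=
  PolynomialModule.equivPolynomialSelf.toLinearMap.compDer D.mapCoeffs

theorem coeff_polynomialDerivation (P : A[X]) (i : ℕ) :
    (polynomialDerivation D P).coeff i = D (P.coeff i) := rfl

theorem polynomialDerivation_monomial (i : ℕ) (a : A) :
    polynomialDerivation D (monomial i a) = monomial i (D a) := by
  ext j
  rw [coeff_polynomialDerivation, coeff_monomial, coeff_monomial, apply_ite D, map_zero]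

theorem polynomialDerivation_iterate_monomial (n i : ℕ) (a : A) :
    (polynomialDerivation D)^[n] (monomial i a) = monomial i (D^[n] a) :=
  (Function.Semiconj.iterate_right (fun b => (polynomialDerivation_monomial D i b).symm) n a).symm

end Derivation

section CharP

variable (p : ℕ) [hp : Fact p.Prime]

theorem cast_factorial_pred_eq_neg_one (R : Type*) [Ring R] [CharP R p] :
    ((p - 1).factorial : R) = -1 := by
  simpa only [map_natCast, map_neg, map_one] using
    congrArg (ZMod.castHom dvd_rfl R) (ZMod.wilsons_lemma p)

variable {A : Type*} [CommRing A] [CharP A p]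

theorem C_sub_X_pow_pred_eq_sum (a : A) :
    (C a - X) ^ (p - 1) = ∑ i ∈ Finset.range p, monomial (p - 1 - i) (a ^ i) := by
  refine (monic_X_sub_C a).isRegular.right ?_
  have hpow : (C a - X) ^ (p - 1) * (C a - X) = (C a) ^ p - X ^ p := by
    rw [pow_sub_one_mul hp.out.ne_zero, sub_pow_char]
  have hgeom := geom_sum₂_mul (C a) X p
  simp only [← C_pow, C_mul_X_pow_eq_monomial] at hpow hgeom
  linear_combination hgeom - hpow

variable {k : Type*} [CommRing k] [Algebra k A] (D : Derivation k A A)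

theorem derivation_iterate_char_mul (a b : A) :
    D^[p] (a * b) = a * D^[p] b + b * D^[p] a := by
  obtain ⟨q, hq⟩ := Nat.exists_eq_succ_of_ne_zero hp.out.ne_zero
  have hmiddle : ∀ i ∈ Finset.range q,
      (p.choose (i + 1) : A) * (D^[i + 1] a * D^[p - (i + 1)] b) = 0 := fun i hi => by
    have hi := Finset.mem_range.1 hi
    rw [(CharP.cast_eq_zero_iff A p _).2 (hp.out.dvd_choose_self (by omega) (by omega)), zero_mul]
  rw [derivation_iterate_mul, Finset.Nat.sum_antidiagonal_eq_sum_range_succ_mk,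
    Finset.sum_range_succ]
  nth_rw 1 [hq]
  rw [Finset.sum_range_succ', Finset.sum_eq_zero hmiddle]
  simp [mul_comm b]

/-- The `p`-th iterate of a derivation in characteristic `p`, as a derivation. -/
noncomputable def derivationPowChar : Derivation k A A :=
  Derivation.mk' ((D : Module.End k A) ^ p) fun a b => by
    simpa only [Module.End.pow_apply, Derivation.coeFn_coe, smul_eq_mul] using
      derivation_iterate_char_mul p D a b

theorem derivationPowChar_apply (a : A) : derivationPowChar p D a = D^[p] a :=
  Module.End.pow_apply (D : Module.End k A) p a

theorem derivation_iterate_pred_pow_mul_of_lt {i : ℕ} (hi : i + 1 < p) (g : A) :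
    D^[p - 1] (g ^ i * D g) = g ^ i * D^[p] g := by
  have hunit : IsUnit ((i + 1 : ℕ) : A) :=
    (CharP.isUnit_natCast_iff hp.out).2 (Nat.not_dvd_of_pos_of_lt i.succ_pos hi)
  refine hunit.mul_left_cancel ?_
  have hpow (E : Derivation k A A) : E (g ^ (i + 1)) = (i + 1 : ℕ) * (g ^ i * E g) := by
    simp [Derivation.leibniz_pow]
  calc ((i + 1 : ℕ) : A) * D^[p - 1] (g ^ i * D g)
      = D^[p - 1] ((i + 1 : ℕ) * (g ^ i * D g)) :=
        (derivation_iterate_const_mul D (D.map_natCast _) _ _).symm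
    _ = D^[p] (g ^ (i + 1)) := by
        rw [← hpow D, ← Function.iterate_succ_apply, Nat.succ_eq_add_one,
          Nat.sub_add_cancel hp.out.one_le]
    _ = (i + 1 : ℕ) * (g ^ i * D^[p] g) := by
        rw [← derivationPowChar_apply, hpow, derivationPowChar_apply]

/- In `A[X]`, the factor `(C g - X) ^ (p - 1)` is the sum of the `g ^ i X ^ (p - 1 - i)`, and
applying `D ^ (p - 1)` to its product with `C x` leaves
`(p - 1)! (D g) ^ (p - 1) x = -(D g) ^ (p - 1) x` modulo `C g - X`. Now evaluate at `X = g`. -/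
theorem sum_pow_mul_derivation_iterate_pred (g x : A) :
    ∑ i ∈ Finset.range p, g ^ (p - 1 - i) * D^[p - 1] (g ^ i * x) = -(D g ^ (p - 1) * x) := by
  obtain ⟨Q, hQ⟩ :=
    dvd_derivation_iterate_pow_mul_sub (polynomialDerivation D) (p - 1) (C g - X) (C x)
  have hDgX : polynomialDerivation D (C g - X) = C (D g) := by
    rw [map_sub, ← monomial_zero_left, ← monomial_one_one_eq_X,
      polynomialDerivation_monomial, polynomialDerivation_monomial, Derivation.map_one_eq_zero,
      monomial_zero_right, sub_zero, monomial_zero_left]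
  have hexpand : (polynomialDerivation D)^[p - 1] ((C g - X) ^ (p - 1) * C x) =
      ∑ i ∈ Finset.range p, monomial (p - 1 - i) (D^[p - 1] (g ^ i * x)) := by
    simp only [C_sub_X_pow_pred_eq_sum, Finset.sum_mul, monomial_mul_C, derivation_iterate_sum,
      polynomialDerivation_iterate_monomial]
  rw [hDgX, hexpand] at hQ
  have heval := congrArg (eval g) hQ
  simp only [eval_sub, eval_finsetSum, eval_monomial, eval_mul, eval_pow, eval_C, eval_X,
    cast_factorial_pred_eq_neg_one, eval_neg, eval_one, sub_self, zero_mul] at heval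
  simp only [mul_comm (g ^ _) (D^[p - 1] _)]
  linear_combination heval

theorem derivation_iterate_pred_pow_pred_mul (g : A) :
    D^[p - 1] (g ^ (p - 1) * D g) = g ^ (p - 1) * D^[p] g - D g ^ p := by
  have hp1 : p - 1 + 1 = p := Nat.sub_add_cancel hp.out.one_le
  have hterm : ∀ i ∈ Finset.range (p - 1),
      g ^ (p - 1 - i) * D^[p - 1] (g ^ i * D g) = g ^ (p - 1) * D^[p] g := fun i hi => by
    have hi := Finset.mem_range.1 hi
    rw [derivation_iterate_pred_pow_mul_of_lt p D (by omega), ← mul_assoc, ← pow_add,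
      Nat.sub_add_cancel hi.le]
  have hsum := sum_pow_mul_derivation_iterate_pred p D g (D g)
  have hcast : ((p - 1 : ℕ) : A) = -1 := by
    rw [Nat.cast_pred hp.out.pos, CharP.cast_eq_zero, zero_sub]
  nth_rw 1 [← hp1] at hsum
  rw [Finset.sum_range_succ, Finset.sum_congr rfl hterm, Finset.sum_const, Finset.card_range,
    nsmul_eq_mul, hcast, Nat.sub_self, pow_zero, one_mul, pow_sub_one_mul hp.out.ne_zero] at hsum
  linear_combination hsum

end CharP

section Reduced

open scoped TensorProduct

variable {R : Type*} [CommRing R] [IsReduced R]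

theorem natDegree_eq_zero_of_isIntegral {y : R[X]} (hy : IsIntegral R y) : y.natDegree = 0 := by
  obtain ⟨q, hq, hqy⟩ := hy
  have hcomp : q.comp y = 0 := hqy
  by_contra hdeg
  have hlead : q.leadingCoeff * y.leadingCoeff ^ q.natDegree ≠ 0 := by
    rw [hq.leadingCoeff, one_mul]
    exact pow_ne_zero _ (leadingCoeff_ne_zero.2 fun h => hdeg (by rw [h, natDegree_zero]))
  have hmul : q.natDegree * y.natDegree = 0 := by
    rw [← natDegree_comp_eq_of_mul_ne_zero hlead, hcomp, natDegree_zero]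
  rw [hq.natDegree_eq_zero.1 ((mul_eq_zero.1 hmul).resolve_right hdeg), one_comp] at hcomp
  exact hdeg (by rw [← mul_one y, hcomp, mul_zero, natDegree_zero])

variable (R) in
/- If `x ^ 2 = 0`, then `x ⊗ X` is integral over `A`, hence lies in the base change of the integral
closure of `R` in `R[X]`, which consists of constants. So its coefficient `x` of `X` vanishes. -/
theorem isReduced_of_smooth (A : Type*) [CommRing A] [Algebra R A] [Algebra.Smooth R A] :
    IsReduced A := by
  rw [isReduced_iff_pow_one_lt 2 one_lt_two]
  intro x hx
  have hint : IsIntegral A (x ⊗ₜ[R] (X : R[X])) :=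
    .of_pow two_pos (by
      rw [Algebra.TensorProduct.tmul_pow, hx, TensorProduct.zero_tmul]; exact isIntegral_zero)
  obtain ⟨z, hz⟩ := (TensorProduct.toIntegralClosure_bijective_of_smooth
    (R := R) (S := A) (B := R[X])).surjective ⟨_, hint⟩
  have hcoeff : lcoeff R 1 ∘ₗ (integralClosure R R[X]).val.toLinearMap = 0 :=
    LinearMap.ext fun y => coeff_eq_zero_of_natDegree_lt
      ((natDegree_eq_zero_of_isIntegral y.2).trans_lt one_pos)
  have hz' : LinearMap.lTensor A (integralClosure R R[X]).val.toLinearMap z = x ⊗ₜ X :=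
    congrArg Subtype.val hz
  have htmul : x ⊗ₜ[R] (1 : R) = 0 := by
    rw [← coeff_X_one, ← lcoeff_apply, ← LinearMap.lTensor_tmul, ← hz', ← LinearMap.comp_apply,
      ← LinearMap.lTensor_comp, hcoeff, LinearMap.lTensor_zero, LinearMap.zero_apply]
  simpa only [TensorProduct.rid_tmul, one_smul, map_zero] using
    congrArg (TensorProduct.rid R A) htmul

end Reduced

section Kaehler

open scoped KaehlerDifferential

variable {k A : Type*} [CommRing k] [CommRing A] [Algebra k A]

theorem derivation_sum_smul_D_eq {ι : Type*} {s : Finset ι} {f g : ι → A} {b : A}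
    (h : ∑ i ∈ s, f i • KaehlerDifferential.D k A (g i) = KaehlerDifferential.D k A b)
    (D : Derivation k A A) : ∑ i ∈ s, f i * D (g i) = D b := by
  simpa only [map_sum, map_smul, Derivation.liftKaehlerDifferential_comp_D, smul_eq_mul] using
    congrArg D.liftKaehlerDifferential h

theorem sum_derivation_pow_char_eq_zero (p : ℕ) [hp : Fact p.Prime] [CharP A p]
    {ι : Type*} {s : Finset ι} {f g : ι → A} {b : A}
    (h : ∑ i ∈ s, (f i ^ p * g i ^ (p - 1)) • KaehlerDifferential.D k A (g i) =
      KaehlerDifferential.D k A b)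
    (D : Derivation k A A) : (∑ i ∈ s, f i * D (g i)) ^ p = 0 := by
  have hiter (i : ι) : D^[p - 1] (f i ^ p * g i ^ (p - 1) * D (g i)) =
      f i ^ p * g i ^ (p - 1) * D^[p] (g i) - (f i * D (g i)) ^ p := by
    have hconst : D (f i ^ p) = 0 := by simp [Derivation.leibniz_pow]
    rw [mul_assoc, derivation_iterate_const_mul D hconst, derivation_iterate_pred_pow_pred_mul]
    ring
  have hD : D^[p - 1] (D b) = ∑ i ∈ s, f i ^ p * g i ^ (p - 1) * D^[p] (g i) -
      ∑ i ∈ s, (f i * D (g i)) ^ p := by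
    rw [← derivation_sum_smul_D_eq h D, derivation_iterate_sum, ← Finset.sum_sub_distrib]
    exact Finset.sum_congr rfl fun i _ => hiter i
  have hDp : ∑ i ∈ s, f i ^ p * g i ^ (p - 1) * D^[p] (g i) = D^[p - 1] (D b) := by
    rw [← Function.iterate_succ_apply, Nat.succ_eq_add_one, Nat.sub_add_cancel hp.out.one_le]
    simpa only [derivationPowChar_apply] using derivation_sum_smul_D_eq h (derivationPowChar p D)
  rw [sum_pow_char]
  linear_combination hD + hDp

theorem sum_smul_D_eq_zero_of_sum_pow_char_smul_D_eq (p : ℕ) [hp : Fact p.Prime] [CharP A p]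
    [IsReduced A] (hΩ : Function.Injective (Module.Dual.eval A Ω[A⁄k]))
    {ι : Type*} {s : Finset ι} {f g : ι → A} {b : A}
    (h : ∑ i ∈ s, (f i ^ p * g i ^ (p - 1)) • KaehlerDifferential.D k A (g i) =
      KaehlerDifferential.D k A b) :
    ∑ i ∈ s, f i • KaehlerDifferential.D k A (g i) = 0 := by
  refine (injective_iff_map_eq_zero _).1 hΩ _ (LinearMap.ext fun φ => ?_)
  have hφ := sum_derivation_pow_char_eq_zero p h (φ.compDer (KaehlerDifferential.D k A))
  simpa [map_sum] using eq_zero_of_pow_eq_zero hφ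

theorem D_eq_zero_of_sum_pow_smul_D_eq (p : ℕ) [hp : Fact p.Prime] [CharP A p]
    [IsReduced A] (hΩ : Function.Injective (Module.Dual.eval A Ω[A⁄k])) {m : ℕ} {a : Fin m → A}
    {b : A} (h : ∑ j, a j ^ (p ^ (m - (j : ℕ)) - 1) • KaehlerDifferential.D k A (a j) =
      KaehlerDifferential.D k A b) (j : Fin m) : KaehlerDifferential.D k A (a j) = 0 := by
  induction m generalizing b with
  | zero => exact j.elim0
  | succ m ih =>
    have hexp (j : Fin (m + 1)) : a j ^ (p ^ (m + 1 - (j : ℕ)) - 1) =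
        (a j ^ (p ^ (m - (j : ℕ)) - 1)) ^ p * a j ^ (p - 1) := by
      rw [← pow_mul, ← pow_add, Nat.succ_sub j.is_le, pow_succ, Nat.sub_one_mul]
      have := Nat.le_mul_of_pos_left p (pow_pos hp.out.pos (m - (j : ℕ)))
      have := hp.out.one_le
      congr 1
      omega
    simp only [hexp] at h
    have hzero := sum_smul_D_eq_zero_of_sum_pow_char_smul_D_eq p hΩ h
    simp only [Fin.sum_univ_castSucc, Fin.val_last, Nat.sub_self, pow_zero, one_smul,
      Fin.val_castSucc] at hzero
    have hinit (i : Fin m) : KaehlerDifferential.D k A (a i.castSucc) = 0 := by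
      refine ih (a := fun i => a i.castSucc) (b := -a (Fin.last m)) ?_ i
      rw [map_neg]
      exact eq_neg_of_add_eq_zero_left hzero
    refine Fin.lastCases ?_ hinit j
    simpa only [hinit, smul_zero, Finset.sum_const_zero, zero_add] using hzero

theorem sum_pow_smul_d_exact_iff_general (p : ℕ) [Fact p.Prime] (hpA : (p : A) = 0)
    [IsReduced A] (hΩ : Function.Injective (Module.Dual.eval A Ω[A⁄k])) {m : ℕ} (a : Fin m → A) :
    (∃ b : A, ∑ j, a j ^ (p ^ (m - (j : ℕ)) - 1) • KaehlerDifferential.D k A (a j) =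
        KaehlerDifferential.D k A b) ↔
      ∀ j, KaehlerDifferential.D k A (a j) = 0 := by
  constructor
  · rintro ⟨b, hb⟩ j
    cases subsingleton_or_nontrivial A
    · rw [Subsingleton.elim (a j) 0, map_zero]
    · have : CharP A p := (CharP.charP_iff_prime_eq_zero Fact.out).2 hpA
      exact D_eq_zero_of_sum_pow_smul_D_eq p hΩ hb j
  · exact fun h => ⟨0, by simp only [h, smul_zero, Finset.sum_const_zero, map_zero]⟩

end Kaehler

/-- Let `k` be a perfect field of characteristic `p > 0` and `A` a smooth
`k`-algebra with universal derivation `d : A → Ω¹_{A/k}`.  For `n ≥ 2` and elements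
`a₁, …, a_{n-1} ∈ A` (indexed here by `j : Fin (n-1)`, with `aᵢ = a ⟨i-1⟩` so that the `i`-th
exponent is `p^{n-i} - 1 = p^{n-1-j} - 1`), the 1-form `∑ᵢ aᵢ^{p^{n-i}-1} d aᵢ` is exact
if and only if `d aᵢ = 0` for every `i`. -/
theorem sum_pow_smul_d_exact_iff (p : ℕ) [Fact p.Prime]
    (k : Type u) [Field k] [CharP k p] [PerfectRing k p]
    (A : Type u) [CommRing A] [Algebra k A]
    [Algebra.FormallySmooth k A] [Algebra.FinitePresentation k A]
    (n : ℕ) (hn : 2 ≤ n) (a : Fin (n - 1) → A) :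
    (∃ b : A,
        (∑ j : Fin (n - 1),
            a j ^ (p ^ (n - 1 - (j : ℕ)) - 1) • KaehlerDifferential.D k A (a j)) =
          KaehlerDifferential.D k A b) ↔
      ∀ j : Fin (n - 1), KaehlerDifferential.D k A (a j) = 0 := by
  have : Algebra.Smooth k A := ⟨inferInstance, inferInstance⟩
  have := isReduced_of_smooth k A
  exact sum_pow_smul_d_exact_iff_general p
    (by rw [← map_natCast (algebraMap k A), CharP.cast_eq_zero, map_zero])
    (Module.eval_apply_injective A) a
end
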